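/- arXiv:2311.02295 — 2 statements merged into one kernel-verified Lean document; each statement's English description precedes it below -/
import Mathlib

section
/- Let s be a nonzero purely imaginary complex number and set t_n = (n + 1/2 + s)/(n + 1/2 − s) for n ∈ ℤ (so |t_n| = 1 for all n). Then the bounded block-shift operator T = T(t_n, 1) on H ⊕ H (i.e. with d_n = 1 for all n) is irreducible. -/
noncomputable section

open Complex Metric

/-- `ℓ²(ℤ)` over `ℂ`. -/
abbrev Hl : Type := lp (fun _ : ℤ => ℂ) 2

/-- The standard orthonormal basis of `ℓ²(ℤ)`. -/
def eb (n : ℤ) : Hl := lp.single 2 n 1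

/-- The Hilbert space direct sum `H ⊕ H`. -/
abbrev H2 : Type := WithLp 2 (Hl × Hl)

/-- A bounded operator on a Hilbert space is irreducible if the only closed subspaces
invariant under both it and its adjoint are `⊥` and `⊤`. -/
def IsIrreducibleOp {E : Type*} [NormedAddCommGroup E] [InnerProductSpace ℂ E] [CompleteSpace E]
    (A : E →L[ℂ] E) : Prop :=
  ∀ K : Submodule ℂ E, IsClosed (K : Set E) →
    (∀ x ∈ K, A x ∈ K) → (∀ x ∈ K, ContinuousLinearMap.adjoint A x ∈ K) →
    K = ⊥ ∨ K = ⊤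

/-- The block operator `(x, y) ↦ (T₀ x + (X T₁ − T₀ X) y, T₁ y)` on the Hilbert space
direct sum `H₀ ⊕ H₁`. -/
def blockT2 {H0 H1 : Type*} [NormedAddCommGroup H0] [NormedSpace ℂ H0]
    [NormedAddCommGroup H1] [NormedSpace ℂ H1]
    (T0 : H0 →L[ℂ] H0) (T1 : H1 →L[ℂ] H1) (X : H1 →L[ℂ] H0) :
    WithLp 2 (H0 × H1) →L[ℂ] WithLp 2 (H0 × H1) :=
  let E := WithLp.prodContinuousLinearEquiv 2 ℂ H0 H1
  (E.symm.toContinuousLinearMap).comp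
    ((((T0.comp (ContinuousLinearMap.fst ℂ H0 H1)) +
        ((X.comp T1 - T0.comp X).comp (ContinuousLinearMap.snd ℂ H0 H1))).prod
      (T1.comp (ContinuousLinearMap.snd ℂ H0 H1))).comp E.toContinuousLinearMap)

/-- The block operator `T(wₙ, vₙ, dₙ)` on `ℓ²(ℤ) ⊕ ℓ²(ℤ)`. -/
def blockT (T0 T1 X : Hl →L[ℂ] Hl) : H2 →L[ℂ] H2 := blockT2 T0 T1 X

/-!
Write `T` as a bilateral shift with `2 × 2` matrix weights `A n`. Here `|tₙ| = 1`, so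
`(A n)ᴴ * A n` has determinant `1` and trace `2 + 4 |α|² (Im tₙ)²`. An operator `P` commuting with
`T` and `T*` has blocks `P m n` satisfying `(A m)ᴴ * A m * P m n = P m n * (A n)ᴴ * A n`. If
`|Im tₙ|` is injective for large `n`, these matrices have coprime characteristic polynomials, hence
`P m n = 0` for large `m ≠ n`, and then for all `m ≠ n` because `P` intertwines the invertible
weights. For the same reason the diagonal blocks are all determined by a single one. That block
commutes with `(A (n + 1))ᴴ * A (n + 1)` and with `A n * (A n)ᴴ`, which do not commute with each
other, so it is scalar.

For `tₙ = (x + s)/(x - s)` with `x = n + 1/2` and `s = iσ` one finds `Im tₙ = 2xσ/(x² + σ²)`, whose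
absolute value is injective in `x > |σ|`.
-/

open scoped Matrix InnerProductSpace ComplexConjugate

section Irreducible

open ContinuousLinearMap

variable {E : Type*} [NormedAddCommGroup E] [InnerProductSpace ℂ E] [CompleteSpace E]

theorem commute_starProjection_of_forall_mem {T : E →L[ℂ] E} {K : Submodule ℂ E}
    [K.HasOrthogonalProjection] (hT : ∀ x ∈ K, T x ∈ K) (hT' : ∀ x ∈ K, adjoint T x ∈ K) :
    Commute K.starProjection T := by
  rw [IsIdempotentElem.commute_iff K.isIdempotentElem_starProjection,
    Submodule.range_starProjection, Submodule.ker_starProjection]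
  exact ⟨hT, orthogonal_mem_invtSubmodule hT'⟩

theorem isIrreducibleOp_of_commutant_eq_scalars {T : E →L[ℂ] E}
    (h : ∀ P : E →L[ℂ] E, Commute P T → Commute P (adjoint T) → ∃ c : ℂ, P = c • 1) :
    IsIrreducibleOp T := by
  intro K hK hT hT'
  have := hK.completeSpace_coe
  have hT'' : ∀ x ∈ K, adjoint (adjoint T) x ∈ K := by rwa [adjoint_adjoint]
  obtain ⟨c, hc⟩ := h K.starProjection (commute_starProjection_of_forall_mem hT hT')
    (commute_starProjection_of_forall_mem hT' hT'')
  rcases eq_or_ne c 0 with rfl | hc0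
  · left
    rw [← K.range_starProjection, hc]
    simp
  · right
    rw [Submodule.eq_top_iff']
    intro x
    have hx : c • x ∈ K := by simpa [hc] using K.starProjection_apply_mem x
    exact (K.smul_mem_iff hc0).mp hx

end Irreducible

section Intertwiners

open Polynomial

theorem semiconjBy_aeval {R A : Type*} [CommSemiring R] [Semiring A] [Algebra R A] {a x y : A}
    (h : SemiconjBy a x y) (p : R[X]) : SemiconjBy a (aeval x p) (aeval y p) := by
  induction p using Polynomial.induction_on' with
  | add p q hp hq => simpa using hp.add_right hq
  | monomial n c =>
    simp only [aeval_monomial]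
    exact SemiconjBy.mul_right (Algebra.commutes c a).symm (h.pow_right n)

theorem eq_zero_of_semiconjBy_of_isCoprime {R A : Type*} [CommSemiring R] [Semiring A]
    [Algebra R A] {a x y : A} {p q : R[X]} (h : SemiconjBy a x y) (hpq : IsCoprime p q)
    (hx : aeval x p = 0) (hy : aeval y q = 0) : a = 0 := by
  obtain ⟨u, v, huv⟩ := hpq
  calc a = a * aeval x (u * p + v * q) := by simp [huv]
    _ = a * aeval x (v * q) := by simp [hx]
    _ = aeval y (v * q) * a := semiconjBy_aeval h _
    _ = 0 := by simp [hy]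

theorem isCoprime_charpoly_fin_two {K : Type*} [Field K] {G G' : Matrix (Fin 2) (Fin 2) K}
    (hdet : G.det = G'.det) (hdet0 : G.det ≠ 0) (htr : G.trace ≠ G'.trace) :
    IsCoprime G.charpoly G'.charpoly := by
  have hunit : IsUnit (C (G'.trace - G.trace)) :=
    isUnit_C.mpr (sub_ne_zero.mpr htr.symm).isUnit
  have hX : IsCoprime X G'.charpoly := by
    rw [irreducible_X.coprime_iff_not_dvd, X_dvd_iff, Matrix.charpoly_fin_two]
    simpa [← hdet] using hdet0
  have hsub : G.charpoly = C (G'.trace - G.trace) * X + G'.charpoly * 1 := by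
    rw [Matrix.charpoly_fin_two, Matrix.charpoly_fin_two, hdet, C_sub]
    ring
  rw [hsub]
  exact ((isCoprime_mul_unit_left_left hunit _ _).mpr hX).add_mul_left_left 1

theorem eq_zero_of_semiconjBy_fin_two {K : Type*} [Field K] {M G G' : Matrix (Fin 2) (Fin 2) K}
    (h : SemiconjBy M G G') (hdet : G.det = G'.det) (hdet0 : G.det ≠ 0)
    (htr : G.trace ≠ G'.trace) : M = 0 :=
  eq_zero_of_semiconjBy_of_isCoprime h (isCoprime_charpoly_fin_two hdet hdet0 htr)
    G.aeval_self_charpoly G'.aeval_self_charpoly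

-- The three equations say that `(M 0 1, M 1 0, M 0 0 - M 1 1)` and the corresponding vector of `G`
-- are parallel.
theorem commute_fin_two_iff {R : Type*} [CommRing R] {M G : Matrix (Fin 2) (Fin 2) R} :
    Commute M G ↔ M 0 1 * G 1 0 = M 1 0 * G 0 1 ∧
      M 0 1 * (G 0 0 - G 1 1) = (M 0 0 - M 1 1) * G 0 1 ∧
      M 1 0 * (G 0 0 - G 1 1) = (M 0 0 - M 1 1) * G 1 0 := by
  rw [commute_iff_eq, ← Matrix.ext_iff]
  simp only [Fin.forall_fin_two, Matrix.mul_apply, Fin.sum_univ_two]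
  grind

theorem exists_eq_smul_one_of_commute_fin_two {R : Type*} [CommRing R] [IsDomain R]
    {M G F : Matrix (Fin 2) (Fin 2) R} (hG : Commute M G) (hF : Commute M F)
    (hGF : ¬ Commute G F) : ∃ c : R, M = c • 1 := by
  contrapose! hGF with hM
  have hM0 : M 0 1 ≠ 0 ∨ M 1 0 ≠ 0 ∨ M 0 0 - M 1 1 ≠ 0 := by
    contrapose! hM
    refine ⟨M 0 0, ?_⟩
    ext i j
    fin_cases i <;> fin_cases j <;> simp_all [sub_eq_zero]
  rw [commute_fin_two_iff] at hG hF ⊢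
  -- Two vectors parallel to the same nonzero vector are parallel.
  rcases hM0 with h | h | h <;> refine ⟨?_, ?_, ?_⟩ <;> refine mul_left_cancel₀ h ?_ <;> grind

theorem eq_zero_of_ne_of_forall_mul_eq {R : Type*} [MonoidWithZero R] {A : ℤ → R}
    {M : ℤ → ℤ → R} (hA : ∀ n, IsUnit (A n))
    (hM : ∀ m n, M (m + 1) (n + 1) * A n = A m * M m n) {N : ℤ}
    (hN : ∀ m ≥ N, ∀ n ≥ N, m ≠ n → M m n = 0) {m n : ℤ} (hmn : m ≠ n) : M m n = 0 := by
  suffices h : ∀ (k : ℕ) (m n : ℤ), m ≠ n → N ≤ m + k → N ≤ n + k → M m n = 0 from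
    h ((N - m).toNat + (N - n).toNat) m n hmn (by omega) (by omega)
  intro k
  induction k with
  | zero => exact fun m n hmn hm hn => hN m (by simpa using hm) n (by simpa using hn) hmn
  | succ k ih =>
    intro m n hmn hm hn
    have hsucc := ih (m + 1) (n + 1) (by omega) (by omega) (by omega)
    rw [← (hA m).mul_right_eq_zero, ← hM, hsucc, zero_mul]

theorem eq_smul_one_of_forall_semiconjBy {S R : Type*} [CommSemiring S] [Semiring R] [Algebra S R]
    {A D : ℤ → R} (hA : ∀ n, IsUnit (A n)) (hD : ∀ n, SemiconjBy (A n) (D n) (D (n + 1)))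
    {c : S} {n₀ : ℤ} (h₀ : D n₀ = c • 1) (n : ℤ) : D n = c • 1 := by
  induction n using Int.inductionOn' (b := n₀) with
  | zero => exact h₀
  | succ k _ ih =>
    refine (hA k).mul_right_cancel ?_
    rw [← (hD k).eq, ih, mul_smul_comm, smul_mul_assoc, one_mul, mul_one]
  | pred k _ ih =>
    refine (hA (k - 1)).mul_left_cancel ?_
    rw [(hD (k - 1)).eq, sub_add_cancel, ih, mul_smul_comm, smul_mul_assoc, one_mul, mul_one]

end Intertwiners

section BlockEntry

open ContinuousLinearMap

variable {𝕜 E ι κ : Type*} [RCLike 𝕜] [NormedAddCommGroup E] [InnerProductSpace 𝕜 E]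

theorem hilbertBasis_ext_inner (b : HilbertBasis κ 𝕜 E) {x y : E}
    (h : ∀ k, ⟪b k, x⟫_𝕜 = ⟪b k, y⟫_𝕜) : x = y := by
  refine b.repr.injective (lp.ext (funext fun k => ?_))
  simpa only [b.repr_apply_apply] using h k

/-- The `(m, n)` block of the matrix of the operator `P` with respect to a Hilbert basis `b`
indexed by `ℤ × ι`: it describes the part of `P` that maps the `n`-th fibre, spanned by the vectors
`b (n, j)`, to the `m`-th one. -/
def blockEntry (b : HilbertBasis (ℤ × ι) 𝕜 E) (P : E →L[𝕜] E) (m n : ℤ) : Matrix ι ι 𝕜 :=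
  Matrix.of fun i j => ⟪b (m, i), P (b (n, j))⟫_𝕜

variable {b : HilbertBasis (ℤ × ι) 𝕜 E}

theorem blockEntry_adjoint [CompleteSpace E] (P : E →L[𝕜] E) (m n : ℤ) :
    blockEntry b (adjoint P) m n = (blockEntry b P n m)ᴴ := by
  ext i j
  simp [blockEntry, adjoint_inner_right]

theorem eq_smul_one_of_blockEntry [DecidableEq ι] {P : E →L[𝕜] E} {c : 𝕜}
    (hdiag : ∀ n, blockEntry b P n n = c • 1) (hoff : ∀ m n, m ≠ n → blockEntry b P m n = 0) :
    P = c • 1 := by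
  refine ext_on (Submodule.dense_iff_topologicalClosure_eq_top.mpr b.dense_span) ?_
  rintro _ ⟨⟨n, j⟩, rfl⟩
  refine hilbertBasis_ext_inner b fun ⟨m, i⟩ => ?_
  change blockEntry b P m n i j = _
  rw [smul_apply, one_apply_eq_self, inner_smul_right, orthonormal_iff_ite.mp b.orthonormal]
  rcases eq_or_ne m n with rfl | hmn
  · simp [hdiag, Matrix.one_apply]
  · simp [hoff m n hmn, hmn]

end BlockEntry

section MatrixWeightedShift

open ContinuousLinearMap

variable {𝕜 E ι : Type*} [RCLike 𝕜] [NormedAddCommGroup E] [InnerProductSpace 𝕜 E] [Fintype ι]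

/-- `T` is the bilateral shift with matrix weights `A n`: it maps the `n`-th fibre of the Hilbert
basis `b`, spanned by the vectors `b (n, j)`, to the `(n + 1)`-st one through the matrix `A n`. -/
def IsMatrixWeightedShift (b : HilbertBasis (ℤ × ι) 𝕜 E) (A : ℤ → Matrix ι ι 𝕜)
    (T : E →L[𝕜] E) : Prop :=
  ∀ n j, T (b (n, j)) = ∑ i, A n i j • b (n + 1, i)

namespace IsMatrixWeightedShift

variable {b : HilbertBasis (ℤ × ι) 𝕜 E} {A : ℤ → Matrix ι ι 𝕜} {T : E →L[𝕜] E}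

theorem blockEntry_mul_self (hT : IsMatrixWeightedShift b A T) (P : E →L[𝕜] E) (m n : ℤ) :
    blockEntry b (P * T) m n = blockEntry b P m (n + 1) * A n := by
  ext i j
  simp [blockEntry, hT n j, inner_sum, inner_smul_right, Matrix.mul_apply, mul_comm]

variable [CompleteSpace E]

theorem adjoint_apply (hT : IsMatrixWeightedShift b A T) (n : ℤ) (i : ι) :
    adjoint T (b (n + 1, i)) = ∑ j, star (A n i j) • b (n, j) := by
  classical
  refine hilbertBasis_ext_inner b fun ⟨k, l⟩ => ?_
  rw [adjoint_inner_right, hT]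
  simp only [sum_inner, inner_sum, inner_smul_left, inner_smul_right,
    orthonormal_iff_ite.mp b.orthonormal, Prod.mk.injEq, add_left_inj]
  rcases eq_or_ne k n with rfl | hkn <;> simp [*]

theorem blockEntry_mul_adjoint (hT : IsMatrixWeightedShift b A T) (P : E →L[𝕜] E) (m n : ℤ) :
    blockEntry b (P * adjoint T) m (n + 1) = blockEntry b P m n * (A n)ᴴ := by
  ext i j
  simp [blockEntry, hT.adjoint_apply, inner_sum, inner_smul_right, Matrix.mul_apply, mul_comm]

theorem blockEntry_self_mul (hT : IsMatrixWeightedShift b A T) (P : E →L[𝕜] E) (m n : ℤ) :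
    blockEntry b (T * P) (m + 1) n = A m * blockEntry b P m n := by
  have hstar : T * P = adjoint (adjoint P * adjoint T) := by
    simp only [← star_eq_adjoint, star_mul, star_star]
  rw [hstar, blockEntry_adjoint, hT.blockEntry_mul_adjoint, blockEntry_adjoint,
    Matrix.conjTranspose_mul, Matrix.conjTranspose_conjTranspose,
    Matrix.conjTranspose_conjTranspose]

theorem blockEntry_adjoint_mul (hT : IsMatrixWeightedShift b A T) (P : E →L[𝕜] E) (m n : ℤ) :
    blockEntry b (adjoint T * P) m n = (A m)ᴴ * blockEntry b P (m + 1) n := by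
  have hstar : adjoint T * P = adjoint (adjoint P * T) := by
    simp only [← star_eq_adjoint, star_mul, star_star]
  rw [hstar, blockEntry_adjoint, hT.blockEntry_mul_self, blockEntry_adjoint,
    Matrix.conjTranspose_mul, Matrix.conjTranspose_conjTranspose]

variable {P : E →L[𝕜] E}

theorem blockEntry_succ_mul (hT : IsMatrixWeightedShift b A T) (hP : Commute P T) (m n : ℤ) :
    blockEntry b P (m + 1) (n + 1) * A n = A m * blockEntry b P m n := by
  rw [← hT.blockEntry_mul_self, hP.eq, hT.blockEntry_self_mul]

theorem conjTranspose_mul_blockEntry_succ (hT : IsMatrixWeightedShift b A T)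
    (hP : Commute P (adjoint T)) (m n : ℤ) :
    (A m)ᴴ * blockEntry b P (m + 1) (n + 1) = blockEntry b P m n * (A n)ᴴ := by
  rw [← hT.blockEntry_adjoint_mul, ← hP.eq, hT.blockEntry_mul_adjoint]

theorem semiconjBy_conjTranspose_mul_self (hT : IsMatrixWeightedShift b A T)
    (hP : Commute P T) (hP' : Commute P (adjoint T)) (m n : ℤ) :
    SemiconjBy (blockEntry b P m n) ((A n)ᴴ * A n) ((A m)ᴴ * A m) := by
  rw [SemiconjBy, ← mul_assoc, ← hT.conjTranspose_mul_blockEntry_succ hP', mul_assoc,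
    hT.blockEntry_succ_mul hP, mul_assoc]

theorem semiconjBy_self_mul_conjTranspose (hT : IsMatrixWeightedShift b A T)
    (hP : Commute P T) (hP' : Commute P (adjoint T)) (m n : ℤ) :
    SemiconjBy (blockEntry b P (m + 1) (n + 1)) (A n * (A n)ᴴ) (A m * (A m)ᴴ) := by
  rw [SemiconjBy, ← mul_assoc, hT.blockEntry_succ_mul hP, mul_assoc,
    ← hT.conjTranspose_mul_blockEntry_succ hP', mul_assoc]

theorem exists_eq_smul_one_of_commute [DecidableEq ι] (hT : IsMatrixWeightedShift b A T)
    (hA : ∀ n, IsUnit (A n)) {N : ℤ}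
    (hoff : ∀ m ≥ N, ∀ n ≥ N, m ≠ n →
      ∀ M, SemiconjBy M ((A n)ᴴ * A n) ((A m)ᴴ * A m) → M = 0)
    {n₀ : ℤ}
    (hdiag : ∀ M, Commute M ((A (n₀ + 1))ᴴ * A (n₀ + 1)) → Commute M (A n₀ * (A n₀)ᴴ) →
      ∃ c : 𝕜, M = c • 1)
    (hP : Commute P T) (hP' : Commute P (adjoint T)) : ∃ c : 𝕜, P = c • 1 := by
  obtain ⟨c, hc⟩ := hdiag _ (hT.semiconjBy_conjTranspose_mul_self hP hP' (n₀ + 1) (n₀ + 1))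
    (hT.semiconjBy_self_mul_conjTranspose hP hP' n₀ n₀)
  have hdiag_all := eq_smul_one_of_forall_semiconjBy (D := fun n => blockEntry b P n n) hA
    (fun n => (hT.blockEntry_succ_mul hP n n).symm) hc
  have hlarge : ∀ m ≥ N, ∀ n ≥ N, m ≠ n → blockEntry b P m n = 0 := fun m hm n hn hmn =>
    hoff m hm n hn hmn _ (hT.semiconjBy_conjTranspose_mul_self hP hP' m n)
  exact ⟨c, eq_smul_one_of_blockEntry hdiag_all fun m n =>
    eq_zero_of_ne_of_forall_mul_eq hA (hT.blockEntry_succ_mul hP) hlarge⟩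

end IsMatrixWeightedShift

end MatrixWeightedShift

section BlockWeight

/-- The matrix by which `T(wₙ, vₙ, dₙ)` maps the span of `(eₙ, 0)` and `(0, eₙ)` to that of
`(eₙ₊₁, 0)` and `(0, eₙ₊₁)`, with `w = wₙ`, `v = vₙ`, `d = dₙ` and `d' = dₙ₊₁`. -/
def blockWeight (w v d d' : ℂ) : Matrix (Fin 2) (Fin 2) ℂ :=
  !![w, d' * v - w * d; 0, v]

theorem det_blockWeight (w v d d' : ℂ) : (blockWeight w v d d').det = w * v := by
  simp [blockWeight]

variable {t u : ℂ}

theorem sub_inv_eq_of_norm_eq_one (ht : ‖t‖ = 1) : t - t⁻¹ = (2 * t.im : ℝ) * I := by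
  rw [Complex.inv_eq_conj ht, Complex.sub_conj]

theorem sub_inv_ne_zero_iff_of_norm_eq_one (ht : ‖t‖ = 1) : t - t⁻¹ ≠ 0 ↔ t.im ≠ 0 := by
  simp [sub_inv_eq_of_norm_eq_one ht]

theorem sub_inv_sq_eq_iff_abs_im_eq (ht : ‖t‖ = 1) (hu : ‖u‖ = 1) :
    (t - t⁻¹) ^ 2 = (u - u⁻¹) ^ 2 ↔ |t.im| = |u.im| := by
  rw [sub_inv_eq_of_norm_eq_one ht, sub_inv_eq_of_norm_eq_one hu, mul_pow, mul_pow,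
    mul_left_inj' (pow_ne_zero 2 I_ne_zero), ← sq_eq_sq_iff_abs_eq_abs]
  norm_cast
  simp [mul_pow]

theorem conjTranspose_blockWeight_of_norm_eq_one (ht : ‖t‖ = 1) (α : ℂ) :
    (blockWeight t t⁻¹ α α)ᴴ = !![t⁻¹, 0; conj α * (t - t⁻¹), t] := by
  have hconj : conj t = t⁻¹ := (Complex.inv_eq_conj ht).symm
  ext i j
  fin_cases i <;> fin_cases j <;> simp [blockWeight, hconj]
  ring

theorem conjTranspose_mul_self_blockWeight (ht : ‖t‖ = 1) (α : ℂ) :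
    (blockWeight t t⁻¹ α α)ᴴ * blockWeight t t⁻¹ α α =
      !![1, -(α * t⁻¹ * (t - t⁻¹));
        conj α * t * (t - t⁻¹), 1 - α * conj α * (t - t⁻¹) ^ 2] := by
  have ht0 : t ≠ 0 := norm_ne_zero_iff.mp (by simp [ht])
  rw [conjTranspose_blockWeight_of_norm_eq_one ht]
  ext i j
  fin_cases i <;> fin_cases j <;> simp [blockWeight, ht0] <;> field_simp <;> ring

theorem self_mul_conjTranspose_blockWeight (ht : ‖t‖ = 1) (α : ℂ) :
    blockWeight t t⁻¹ α α * (blockWeight t t⁻¹ α α)ᴴ =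
      !![1 - α * conj α * (t - t⁻¹) ^ 2, -(α * t * (t - t⁻¹));
        conj α * t⁻¹ * (t - t⁻¹), 1] := by
  have ht0 : t ≠ 0 := norm_ne_zero_iff.mp (by simp [ht])
  rw [conjTranspose_blockWeight_of_norm_eq_one ht]
  ext i j
  fin_cases i <;> fin_cases j <;> simp [blockWeight, ht0] <;> field_simp <;> ring

theorem det_conjTranspose_mul_self_blockWeight (ht : ‖t‖ = 1) (α : ℂ) :
    ((blockWeight t t⁻¹ α α)ᴴ * blockWeight t t⁻¹ α α).det = 1 := by
  have ht0 : t ≠ 0 := norm_ne_zero_iff.mp (by simp [ht])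
  simp [Matrix.det_conjTranspose, det_blockWeight, ht0]

variable {α : ℂ}

theorem trace_conjTranspose_mul_self_blockWeight_ne (ht : ‖t‖ = 1) (hu : ‖u‖ = 1) (hα : α ≠ 0)
    (htu : |t.im| ≠ |u.im|) :
    ((blockWeight t t⁻¹ α α)ᴴ * blockWeight t t⁻¹ α α).trace ≠
      ((blockWeight u u⁻¹ α α)ᴴ * blockWeight u u⁻¹ α α).trace := by
  simpa [conjTranspose_mul_self_blockWeight ht, conjTranspose_mul_self_blockWeight hu, hα] using
    mt (sub_inv_sq_eq_iff_abs_im_eq ht hu).mp htu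

theorem not_commute_conjTranspose_mul_self_blockWeight (ht : ‖t‖ = 1) (hu : ‖u‖ = 1)
    (hα : α ≠ 0) (ht_im : t.im ≠ 0) (hu_im : u.im ≠ 0) (htu : |t.im| ≠ |u.im|) :
    ¬ Commute ((blockWeight t t⁻¹ α α)ᴴ * blockWeight t t⁻¹ α α)
      (blockWeight u u⁻¹ α α * (blockWeight u u⁻¹ α α)ᴴ) := by
  rw [conjTranspose_mul_self_blockWeight ht, self_mul_conjTranspose_blockWeight hu,
    commute_fin_two_iff]
  rintro ⟨-, h01, h10⟩
  simp only [Matrix.of_apply, Matrix.cons_val', Matrix.cons_val_zero, Matrix.cons_val_one]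
    at h01 h10
  have ht0 : t ≠ 0 := norm_ne_zero_iff.mp (by simp [ht])
  have hu0 : u ≠ 0 := norm_ne_zero_iff.mp (by simp [hu])
  have hα' : conj α ≠ 0 := by simpa using hα
  have hsub : (t - t⁻¹) * (u - u⁻¹) ≠ 0 :=
    mul_ne_zero ((sub_inv_ne_zero_iff_of_norm_eq_one ht).mpr ht_im)
      ((sub_inv_ne_zero_iff_of_norm_eq_one hu).mpr hu_im)
  have h₁ : t⁻¹ * (u - u⁻¹) = -(u * (t - t⁻¹)) := by
    refine mul_left_cancel₀ (mul_ne_zero (mul_ne_zero (mul_ne_zero hα hα) hα') hsub) ?_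
    linear_combination h01
  have h₂ : t * (u - u⁻¹) = -(u⁻¹ * (t - t⁻¹)) := by
    refine mul_left_cancel₀ (mul_ne_zero (mul_ne_zero (mul_ne_zero hα hα') hα') hsub) ?_
    linear_combination -h10
  refine htu ((sub_inv_sq_eq_iff_abs_im_eq ht hu).mp ?_)
  calc (t - t⁻¹) ^ 2 = -(u * (t - t⁻¹)) * -(u⁻¹ * (t - t⁻¹)) := by field_simp
    _ = t⁻¹ * (u - u⁻¹) * (t * (u - u⁻¹)) := by rw [h₁, h₂]
    _ = (u - u⁻¹) ^ 2 := by field_simp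

end BlockWeight

section BlockT

/-- The vectors of `summandBasis`: the standard basis vector `eₙ` of the first summand at `(n, 0)`
and that of the second summand at `(n, 1)`. -/
def summandVector (p : ℤ × Fin 2) : H2 :=
  WithLp.toLp 2 (![(eb p.1, 0), (0, eb p.1)] p.2)

theorem inner_summandVector (p : ℤ × Fin 2) (v : H2) :
    ⟪summandVector p, v⟫_ℂ = ![v.fst p.1, v.snd p.1] p.2 := by
  obtain ⟨n, i⟩ := p
  fin_cases i <;> simp [summandVector, eb, WithLp.prod_inner_apply, lp.inner_single_left]

theorem orthonormal_summandVector : Orthonormal ℂ summandVector := by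
  rw [orthonormal_iff_ite]
  rintro ⟨m, i⟩ ⟨n, j⟩
  rw [inner_summandVector]
  fin_cases i <;> fin_cases j <;> simp [summandVector, eb, Pi.single_apply]

theorem orthogonal_span_summandVector :
    (Submodule.span ℂ (Set.range summandVector))ᗮ = ⊥ := by
  rw [Submodule.eq_bot_iff]
  intro v hv
  have hcoord (p : ℤ × Fin 2) : ![v.fst p.1, v.snd p.1] p.2 = 0 := by
    rw [← inner_summandVector]
    exact hv _ (Submodule.subset_span ⟨p, rfl⟩)
  refine WithLp.ofLp_injective 2 (Prod.ext (lp.ext ?_) (lp.ext ?_)) <;> funext n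
  · exact hcoord (n, 0)
  · exact hcoord (n, 1)

/-- The standard Hilbert basis of `H ⊕ H`, indexed so that its `n`-th fibre consists of `(eₙ, 0)`
and `(0, eₙ)`. -/
def summandBasis : HilbertBasis (ℤ × Fin 2) ℂ H2 :=
  HilbertBasis.mkOfOrthogonalEqBot orthonormal_summandVector orthogonal_span_summandVector

theorem coe_summandBasis : ⇑summandBasis = summandVector :=
  HilbertBasis.coe_mkOfOrthogonalEqBot _ _

variable {T₀ T₁ X : Hl →L[ℂ] Hl}

theorem isMatrixWeightedShift_blockT {w v d : ℤ → ℂ}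
    (hT₀ : ∀ n, T₀ (eb n) = w n • eb (n + 1)) (hT₁ : ∀ n, T₁ (eb n) = v n • eb (n + 1))
    (hX : ∀ n, X (eb n) = d n • eb n) :
    IsMatrixWeightedShift summandBasis
      (fun n => blockWeight (w n) (v n) (d n) (d (n + 1))) (blockT T₀ T₁ X) := by
  intro n j
  refine WithLp.ofLp_injective 2 ?_
  fin_cases j <;>
    simp [coe_summandBasis, summandVector, blockWeight, blockT, blockT2, hT₀, hT₁, hX, smul_smul,
      sub_smul, mul_comm]

theorem exists_ne_zero_of_injOn_Ici {M : Type*} [Zero M] {f : ℤ → M} {N : ℤ}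
    (hf : Set.InjOn f (Set.Ici N)) : ∃ n ≥ N, f n ≠ 0 ∧ f (n + 1) ≠ 0 := by
  have hne {m n : ℤ} (hm : N ≤ m) (hmn : m < n) (h : f m = 0) : f n ≠ 0 := fun h' =>
    hmn.ne (hf hm (hm.trans hmn.le) (h.trans h'.symm))
  by_cases h : f N = 0 ∨ f (N + 1) = 0
  · refine ⟨N + 2, by omega, ?_⟩
    rcases h with h | h <;> exact ⟨hne (by omega) (by omega) h, hne (by omega) (by omega) h⟩
  · push Not at h
    exact ⟨N, le_rfl, h⟩

theorem isIrreducibleOp_blockT_of_injOn_abs_im {t : ℤ → ℂ} {α : ℂ} {N : ℤ}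
    (ht : ∀ n, ‖t n‖ = 1) (hinj : Set.InjOn (fun n => |(t n).im|) (Set.Ici N)) (hα : α ≠ 0)
    (hT₀ : ∀ n, T₀ (eb n) = t n • eb (n + 1)) (hT₁ : ∀ n, T₁ (eb n) = (t n)⁻¹ • eb (n + 1))
    (hX : ∀ n, X (eb n) = α • eb n) : IsIrreducibleOp (blockT T₀ T₁ X) := by
  have hshift := isMatrixWeightedShift_blockT hT₀ hT₁ hX
  have hunit (n : ℤ) : IsUnit (blockWeight (t n) (t n)⁻¹ α α) := by
    have ht0 : t n ≠ 0 := norm_ne_zero_iff.mp (by simp [ht])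
    simp [Matrix.isUnit_iff_isUnit_det, det_blockWeight, ht0]
  obtain ⟨n₀, hn₀, h₀, h₁⟩ := exists_ne_zero_of_injOn_Ici hinj
  refine isIrreducibleOp_of_commutant_eq_scalars fun P =>
    hshift.exists_eq_smul_one_of_commute hunit (N := N) (n₀ := n₀) ?_ ?_
  · intro m hm n hn hmn M hM
    refine eq_zero_of_semiconjBy_fin_two hM ?_ ?_
      (trace_conjTranspose_mul_self_blockWeight_ne (ht n) (ht m) hα (hinj.ne hn hm hmn.symm)) <;>
    simp only [det_conjTranspose_mul_self_blockWeight (ht _), ne_eq, one_ne_zero, not_false_eq_true]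
  · intro M hM hM'
    have hne : |(t (n₀ + 1)).im| ≠ |(t n₀).im| :=
      hinj.ne (Set.mem_Ici.mpr (by omega)) hn₀ (by omega)
    exact exists_eq_smul_one_of_commute_fin_two hM hM'
      (not_commute_conjTranspose_mul_self_blockWeight (ht _) (ht _) hα (abs_ne_zero.mp h₁)
        (abs_ne_zero.mp h₀) hne)

end BlockT

section ImaginaryParameter

variable {s : ℂ}

theorem norm_add_div_sub_eq_one (hs : s ≠ 0) (hre : s.re = 0) (x : ℝ) :
    ‖((x : ℂ) + s) / ((x : ℂ) - s)‖ = 1 := by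
  have him : s.im ≠ 0 := fun h => hs (Complex.ext hre h)
  have hne : (x : ℂ) - s ≠ 0 := fun h => him (by simpa using congrArg Complex.im h)
  have hconj : conj ((x : ℂ) - s) = x + s := by
    apply Complex.ext <;> simp [hre]
  rw [norm_div, ← hconj, RCLike.norm_conj, div_self (norm_ne_zero_iff.mpr hne)]

theorem im_add_div_sub (hre : s.re = 0) (x : ℝ) :
    (((x : ℂ) + s) / ((x : ℂ) - s)).im = 2 * x * s.im / (x ^ 2 + s.im ^ 2) := by
  simp only [Complex.div_im, Complex.normSq_apply, add_im, ofReal_im, sub_re, ofReal_re, add_re,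
    sub_im, hre]
  ring

theorem injOn_abs_im_add_div_sub (hs : s ≠ 0) (hre : s.re = 0) :
    Set.InjOn (fun x : ℝ => |(((x : ℂ) + s) / ((x : ℂ) - s)).im|) (Set.Ioi |s.im|) := by
  intro x hx y hy hxy
  have hσ : 0 < |s.im| := abs_pos.mpr fun h => hs (Complex.ext hre h)
  have habs {z : ℝ} (hz : 0 < z) : |(((z : ℂ) + s) / ((z : ℂ) - s)).im| =
      2 * z * |s.im| / (z ^ 2 + |s.im| ^ 2) := by
    rw [im_add_div_sub hre, sq_abs, abs_div, abs_mul, abs_of_pos (by positivity : 0 < 2 * z),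
      abs_of_nonneg (by positivity : 0 ≤ z ^ 2 + s.im ^ 2)]
  rw [Set.mem_Ioi] at hx hy
  have hx0 : 0 < x := hσ.trans hx
  have hy0 : 0 < y := hσ.trans hy
  simp only [habs hx0, habs hy0] at hxy
  rw [div_eq_div_iff (by positivity) (by positivity)] at hxy
  have hprod : (x - y) * (x * y - |s.im| ^ 2) = 0 := by
    refine mul_left_cancel₀ hσ.ne' ?_
    linear_combination -hxy / 2
  have hpos : 0 < x * y - |s.im| ^ 2 := by nlinarith
  exact sub_eq_zero.mp ((mul_eq_zero.mp hprod).resolve_right hpos.ne')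

theorem irreducibility_example_pure_imaginary_general (hs : s ≠ 0) (hre : s.re = 0) (a : ℝ)
    {α : ℂ} (hα : α ≠ 0) {T₀ T₁ X : Hl →L[ℂ] Hl}
    (hT₀ : ∀ n : ℤ, T₀ (eb n) = (((n : ℂ) + a + s) / ((n : ℂ) + a - s)) • eb (n + 1))
    (hT₁ : ∀ n : ℤ, T₁ (eb n) = (((n : ℂ) + a + s) / ((n : ℂ) + a - s))⁻¹ • eb (n + 1))
    (hX : ∀ n : ℤ, X (eb n) = α • eb n) : IsIrreducibleOp (blockT T₀ T₁ X) := by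
  have hcast (n : ℤ) : (n : ℂ) + a = ((n + a : ℝ) : ℂ) := by push_cast; rfl
  simp only [hcast] at hT₀ hT₁
  refine isIrreducibleOp_blockT_of_injOn_abs_im (N := ⌊|s.im| - a⌋ + 1)
    (fun n => norm_add_div_sub_eq_one hs hre (n + a)) ?_ hα hT₀ hT₁ hX
  refine (injOn_abs_im_add_div_sub hs hre).comp (f := fun n : ℤ => (n : ℝ) + a)
    ((add_left_injective a).comp Int.cast_injective).injOn fun n hn => ?_
  exact sub_lt_iff_lt_add.mp (Int.floor_lt.mp hn)

end ImaginaryParameter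

/-- Example 3.4: with `tₙ = (n + 1/2 + s)/(n + 1/2 − s)` for a nonzero purely imaginary `s`,
the operator `T(tₙ, 1)` is irreducible. -/
theorem irreducibility_example_pure_imaginary
    (s : ℂ) (hs : s ≠ 0) (hs' : s.re = 0)
    (T0 T1 X : Hl →L[ℂ] Hl)
    (hT0 : ∀ n : ℤ,
      T0 (eb n) = ((((n : ℂ) + 1 / 2 + s) / ((n : ℂ) + 1 / 2 - s)) • eb (n + 1)))
    (hT1 : ∀ n : ℤ,
      T1 (eb n) = ((((n : ℂ) + 1 / 2 + s) / ((n : ℂ) + 1 / 2 - s))⁻¹ • eb (n + 1)))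
    (hX : ∀ n : ℤ, X (eb n) = eb n)
    (hXT : X.comp T1 ≠ T0.comp X) :
    IsIrreducibleOp (blockT T0 T1 X) := by
  have hcast : (((1 / 2 : ℝ) : ℂ)) = 1 / 2 := by norm_num
  exact irreducibility_example_pure_imaginary_general hs hs' (1 / 2) one_ne_zero
    (by rwa [hcast]) (by rwa [hcast]) (by simpa only [one_smul] using hX)
end
end

section
/- Let 0 < a < b < 1 with a + b = 1, let (d_n)_{n∈ℤ} be a bounded sequence of positive real numbers, and set t_n = √((n+a)/(n+b)) and c_n = √((n+1−a)/(n+1−b))·d_{n+1} − √((n+a)/(n+b))·d_n for n ∈ ℤ. Suppose that d_n = d_{−n} for all n ∈ ℤ and that for every n ∈ ℤ: √((n+a)/(n+b))·c_n·[(1+d_n²)·(n−a)/(n−b) + (1+d_{n−1}²)·(n−b)/(n−a) − 2d_{n−1}d_n] ≠ √((n−b)/(n−a))·c_{n−1}·[(1−d_n²)·(n+a)/(n+b) − (1+d_{n+1}²)·(n+b)/(n+a) + 2d_n d_{n+1}]. Then the bounded block-shift operator T = T(√((n+a)/(n+b)), d_n) on H ⊕ H is irreducible. -/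
noncomputable section

open Complex Metric

/-!
An operator is irreducible once only scalars commute with it and with its adjoint. Write `T` as a
bilateral block shift on `⨁ E_j`, `dim E_j = 2`, with upper triangular blocks of determinant `1`,
and let `B` commute with `T` and `T*`. Its blocks `B_ij` intertwine the Gram matrices
`(Tⁿ)* Tⁿ|E_j` and `(Tⁿ)* Tⁿ|E_i` for every `n`, and `det B_ij` only depends on `i - j`.

If `i ≠ j` then `B_ij` is singular: otherwise the two Gram matrices have the same trace for all `n`.
Multiplied by the squared product of the first `n` weights, which tends to `0`, the trace is
asymptotic to `1 + |d_{j+n}|²`. As the weights increase to the right, equality of the traces would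
force this quantity to grow geometrically along an arithmetic progression, against boundedness.
Subtracting from `B` an eigenvalue of `B_00`, which does not affect the off-diagonal blocks, makes
the diagonal blocks singular too.

The kernel of a singular block `B_ij` is invariant under the Gram matrices at `j`, so if
`B_ij ≠ 0` it is spanned by a common eigenvector `v` of them. Letting `n` tend to infinity in the
condition that `v` and its image be parallel shows that one coordinate of `v` vanishes, and then
that `(X T₁ⁿ - T₀ⁿ X) e_j = 0` for all `n`. This fails for all `j` far enough to the left because
`X T₁ ≠ T₀ X`, and zero blocks propagate to the right along diagonals, so `B = 0`.
-/

open Filter Topology InnerProductSpace ContinuousLinearMap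
open scoped Matrix

section ShiftProduct

/-- The product `w j * w (j + 1) * ⋯ * w (j + n - 1)` of `n` consecutive weights: the coefficient
of `e_{j+n}` in `Tⁿ e_j` for the weighted shift `T e_i = w i • e_{i+1}`. -/
def shiftProd {M : Type*} [CommMonoid M] (w : ℤ → M) (j : ℤ) (n : ℕ) : M :=
  ∏ m ∈ Finset.range n, w (j + m)

section CommMonoid

variable {M : Type*} [CommMonoid M]

@[simp]
lemma shiftProd_zero (w : ℤ → M) (j : ℤ) : shiftProd w j 0 = 1 := rfl

@[simp]
lemma shiftProd_one (w : ℤ → M) (j : ℤ) : shiftProd w j 1 = w j := by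
  simp [shiftProd]

lemma shiftProd_add (w : ℤ → M) (j : ℤ) (m n : ℕ) :
    shiftProd w j (m + n) = shiftProd w j m * shiftProd w (j + m) n := by
  simp [shiftProd, Finset.prod_range_add, add_assoc]

end CommMonoid

lemma shiftProd_ne_zero {M₀ : Type*} [CommMonoidWithZero M₀] [Nontrivial M₀] [NoZeroDivisors M₀]
    {w : ℤ → M₀} (hw : ∀ n, w n ≠ 0) (j : ℤ) (n : ℕ) : shiftProd w j n ≠ 0 :=
  Finset.prod_ne_zero_iff.mpr fun _ _ => hw _

section NormedField

variable {𝕜 : Type*} [NormedField 𝕜] {w : ℤ → 𝕜}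

lemma norm_shiftProd (w : ℤ → 𝕜) (j : ℤ) (n : ℕ) :
    ‖shiftProd w j n‖ = shiftProd (fun i => ‖w i‖) j n :=
  norm_prod _ _

lemma tendsto_shiftProd_add_natCast_iff (hw : ∀ n, w n ≠ 0) (j : ℤ) (k : ℕ) :
    Tendsto (shiftProd w (j + k)) atTop (𝓝 0) ↔ Tendsto (shiftProd w j) atTop (𝓝 0) := by
  have hcancel : ∀ n, shiftProd w (j + k) n = (shiftProd w j k)⁻¹ * shiftProd w j (n + k) := by
    intro n
    rw [add_comm n k, shiftProd_add, inv_mul_cancel_left₀ (shiftProd_ne_zero hw j k)]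
  rw [← tendsto_add_atTop_iff_nat (f := shiftProd w j) k]
  constructor <;> intro h
  · simpa [hcancel, mul_inv_cancel_left₀ (shiftProd_ne_zero hw j k)] using
      h.const_mul (shiftProd w j k)
  · simpa [← hcancel] using h.const_mul (shiftProd w j k)⁻¹

lemma tendsto_shiftProd_of_tendsto_shiftProd (hw : ∀ n, w n ≠ 0) {i : ℤ}
    (h : Tendsto (shiftProd w i) atTop (𝓝 0)) (j : ℤ) : Tendsto (shiftProd w j) atTop (𝓝 0) := by
  rcases le_total i j with hij | hji
  · obtain ⟨k, rfl⟩ := Int.le.dest hij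
    exact (tendsto_shiftProd_add_natCast_iff hw i k).mpr h
  · obtain ⟨k, rfl⟩ := Int.le.dest hji
    exact (tendsto_shiftProd_add_natCast_iff hw j k).mp h

end NormedField

section Monotone

variable {w : ℤ → ℝ} {N : ℤ}

lemma shiftProd_pos (hw : ∀ n, 0 < w n) (j : ℤ) (n : ℕ) : 0 < shiftProd w j n :=
  Finset.prod_pos fun _ _ => hw _

lemma monotoneOn_shiftProd (hw : ∀ n, 0 < w n) (hmono : MonotoneOn w (Set.Ici N)) (n : ℕ) :
    MonotoneOn (fun j => shiftProd w j n) (Set.Ici N) := by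
  intro i hi j hj hij
  rw [Set.mem_Ici] at hi hj
  exact Finset.prod_le_prod (fun _ _ => (hw _).le) fun m _ =>
    hmono (Set.mem_Ici.mpr (by omega)) (Set.mem_Ici.mpr (by omega)) (by omega)

lemma strictMonoOn_shiftProd (hw : ∀ n, 0 < w n) (hmono : StrictMonoOn w (Set.Ici N)) {n : ℕ}
    (hn : 0 < n) : StrictMonoOn (fun j => shiftProd w j n) (Set.Ici N) := by
  intro i hi j hj hij
  rw [Set.mem_Ici] at hi hj
  exact Finset.prod_lt_prod_of_nonempty (fun _ _ => hw _)
    (fun m _ => hmono (Set.mem_Ici.mpr (by omega)) (Set.mem_Ici.mpr (by omega)) (by omega))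
    (by simpa using hn.ne')

lemma exists_one_lt_forall_mul_shiftProd_le (hw : ∀ n, 0 < w n)
    (hmono : StrictMonoOn w (Set.Ici N)) {j : ℤ} (hj : N ≤ j) {k : ℕ} (hk : 0 < k) :
    ∃ r : ℝ, 1 < r ∧ ∀ n : ℕ, 1 ≤ n → r * shiftProd w j n ≤ shiftProd w (j + k) n := by
  have hk_pos := shiftProd_pos hw j k
  refine ⟨shiftProd w (j + 1) k / shiftProd w j k, (one_lt_div hk_pos).mpr ?_, fun n hn => ?_⟩
  · exact strictMonoOn_shiftProd hw hmono hk (Set.mem_Ici.mpr hj) (Set.mem_Ici.mpr (by omega))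
      (by omega)
  have hswap : shiftProd w j n * shiftProd w (j + n) k =
      shiftProd w j k * shiftProd w (j + k) n := by
    rw [← shiftProd_add, ← shiftProd_add, add_comm]
  rw [div_mul_eq_mul_div, div_le_iff₀ hk_pos, mul_comm (shiftProd w (j + k) n), ← hswap, mul_comm]
  exact mul_le_mul_of_nonneg_left
    (monotoneOn_shiftProd hw hmono.monotoneOn k (Set.mem_Ici.mpr (by omega))
      (Set.mem_Ici.mpr (by omega)) (by omega)) (shiftProd_pos hw j n).le

end Monotone

end ShiftProduct

section RealSequences

lemma not_bddAbove_range_of_eventually_mul_le {u : ℕ → ℝ} {r : ℝ} {k : ℕ} (hr : 1 < r)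
    (hu : ∀ n, 0 < u n) (h : ∀ᶠ n in atTop, r * u n ≤ u (n + k)) :
    ¬ BddAbove (Set.range u) := by
  rintro ⟨C, hC⟩
  obtain ⟨N, hN⟩ := eventually_atTop.mp h
  have hgeom : ∀ m : ℕ, r ^ m * u N ≤ u (N + m * k) := by
    intro m
    induction m with
    | zero => simp
    | succ m ih =>
      calc r ^ (m + 1) * u N = r * (r ^ m * u N) := by ring
        _ ≤ r * u (N + m * k) := by gcongr
        _ ≤ u (N + m * k + k) := hN _ (Nat.le_add_right _ _)
        _ = u (N + (m + 1) * k) := by congr 1; ring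
  obtain ⟨m, hm⟩ := pow_unbounded_of_one_lt (C / u N) hr
  have hC_lt : C < r ^ m * u N := (div_lt_iff₀ (hu N)).mp hm
  exact (hC_lt.trans_le (hgeom m)).not_ge (hC ⟨_, rfl⟩)

lemma eventually_mul_le_of_tendsto_sub {u v f g : ℕ → ℝ} {r s : ℝ} (hsr : s < r)
    (hu : ∀ n, 1 ≤ u n) (hf : Tendsto (fun n => f n - u n) atTop (𝓝 0))
    (hg : Tendsto (fun n => g n - v n) atTop (𝓝 0)) (hfg : ∀ᶠ n in atTop, r * f n ≤ g n) :
    ∀ᶠ n in atTop, s * u n ≤ v n := by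
  have herr : Tendsto (fun n => (g n - v n) - r * (f n - u n)) atTop (𝓝 0) := by
    simpa using hg.sub (hf.const_mul r)
  filter_upwards [hfg, herr.eventually_le_const (sub_pos.mpr hsr)] with n hn herr_n
  have : r - s ≤ (r - s) * u n := le_mul_of_one_le_right (sub_pos.mpr hsr).le (hu n)
  linarith

lemma tendsto_sq_norm_sub_sq_norm {E : Type*} [SeminormedAddCommGroup E] {x y : ℕ → E} {C : ℝ}
    (hy : ∀ n, ‖y n‖ ≤ C) (hxy : Tendsto (fun n => x n - y n) atTop (𝓝 0)) :
    Tendsto (fun n => ‖x n‖ ^ 2 - ‖y n‖ ^ 2) atTop (𝓝 0) := by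
  have hxy' : Tendsto (fun n => ‖x n - y n‖) atTop (𝓝 0) := by simpa using hxy.norm
  have hbound : Tendsto (fun n => ‖x n - y n‖ * (‖x n - y n‖ + 2 * C)) atTop (𝓝 0) := by
    simpa using hxy'.mul (hxy'.add_const (2 * C))
  refine squeeze_zero_norm (fun n => ?_) hbound
  have hsum : ‖x n‖ + ‖y n‖ ≤ ‖x n - y n‖ + 2 * C := by
    linarith [norm_sub_norm_le (x n) (y n), hy n]
  calc ‖‖x n‖ ^ 2 - ‖y n‖ ^ 2‖ = |‖x n‖ - ‖y n‖| * (‖x n‖ + ‖y n‖) := by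
        rw [sq_sub_sq, Real.norm_eq_abs, abs_mul, mul_comm,
          abs_of_nonneg (add_nonneg (norm_nonneg (x n)) (norm_nonneg (y n)))]
    _ ≤ ‖x n - y n‖ * (‖x n - y n‖ + 2 * C) := by
        gcongr
        exact abs_norm_sub_norm_le _ _

lemma tendsto_prod_one_sub_zero {s : ℕ → ℝ} (hs0 : ∀ n, 0 ≤ s n) (hs1 : ∀ n, s n ≤ 1)
    (hs : ¬ Summable s) : Tendsto (fun n => ∏ m ∈ Finset.range n, (1 - s m)) atTop (𝓝 0) := by
  have hexp : Tendsto (fun n => Real.exp (-∑ m ∈ Finset.range n, s m)) atTop (𝓝 0) :=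
    Real.tendsto_exp_neg_atTop_nhds_zero.comp
      ((not_summable_iff_tendsto_nat_atTop_of_nonneg hs0).mp hs)
  refine squeeze_zero (fun n => Finset.prod_nonneg fun m _ => sub_nonneg.mpr (hs1 m)) (fun n => ?_)
    hexp
  rw [← Finset.sum_neg_distrib, Real.exp_sum]
  exact Finset.prod_le_prod (fun m _ => sub_nonneg.mpr (hs1 m)) fun m _ =>
    Real.one_sub_le_exp_neg (s m)

end RealSequences

section Commutant

variable {E : Type*} [NormedAddCommGroup E] [InnerProductSpace ℂ E] [CompleteSpace E]

lemma commute_starProjection_of_invariant {A : E →L[ℂ] E} {K : Submodule ℂ E}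
    [K.HasOrthogonalProjection] (hA : ∀ x ∈ K, A x ∈ K) (hA' : ∀ x ∈ K, adjoint A x ∈ K) :
    Commute K.starProjection A := by
  refine (IsIdempotentElem.commute_iff K.isIdempotentElem_starProjection).mpr ⟨?_, ?_⟩
  · rw [Submodule.range_starProjection]
    exact hA
  · rw [Submodule.ker_starProjection]
    exact orthogonal_mem_invtSubmodule hA'

theorem isIrreducibleOp_of_commutant_scalar {A : E →L[ℂ] E}
    (h : ∀ B : E →L[ℂ] E, Commute B A → Commute B (adjoint A) → ∃ l : ℂ, B = l • 1) :
    IsIrreducibleOp A := by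
  intro K hK hA hA'
  have : CompleteSpace K := hK.completeSpace_coe
  obtain ⟨l, hl⟩ := h K.starProjection (commute_starProjection_of_invariant hA hA')
    (commute_starProjection_of_invariant hA' (by rwa [adjoint_adjoint]))
  have hproj : ∀ x, K.starProjection x = l • x := fun x => by rw [hl]; simp
  by_cases hl0 : l = 0
  · refine Or.inl ((Submodule.eq_bot_iff K).mpr fun x hx => ?_)
    rw [← Submodule.starProjection_eq_self_iff.mpr hx, hproj, hl0, zero_smul]
  · refine Or.inr (Submodule.eq_top_iff'.mpr fun x => ?_)
    rw [← inv_smul_smul₀ hl0 x, ← hproj]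
    exact K.smul_mem _ (K.starProjection_apply_mem x)

end Commutant

section BlockShift

variable {E : Type*} [NormedAddCommGroup E] [InnerProductSpace ℂ E]

lemma eq_of_forall_inner_hilbertBasis_eq {κ : Type*} (e : HilbertBasis κ ℂ E) {x y : E}
    (h : ∀ q, ⟪e q, x⟫_ℂ = ⟪e q, y⟫_ℂ) : x = y := by
  apply e.repr.injective
  ext q
  simpa only [e.repr_apply_apply] using h q

lemma eq_of_forall_hilbertBasis_eq {κ F : Type*} [NormedAddCommGroup F] [NormedSpace ℂ F]
    (e : HilbertBasis κ ℂ E) {A B : E →L[ℂ] F} (h : ∀ q, A (e q) = B (e q)) : A = B :=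
  ContinuousLinearMap.ext_on (Submodule.dense_iff_topologicalClosure_eq_top.mpr e.dense_span)
    (Set.forall_mem_range.mpr h)

variable {ι : Type*} (e : HilbertBasis (ℤ × ι) ℂ E)

/-- The block in position `(i, j)` of the matrix of `B` with respect to the decomposition of `E`
into the subspaces `E_i` spanned by the vectors `e (i, k)` for `k : ι`. -/
def opBlock (B : E →L[ℂ] E) (i j : ℤ) : Matrix ι ι ℂ :=
  .of fun k l => ⟪e (i, k), B (e (j, l))⟫_ℂ

lemma eq_zero_of_forall_opBlock_eq_zero {B : E →L[ℂ] E} (h : ∀ i j, opBlock e B i j = 0) :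
    B = 0 :=
  eq_of_forall_hilbertBasis_eq e fun q => eq_of_forall_inner_hilbertBasis_eq e fun p => by
    simpa [opBlock] using congrFun₂ (h p.1 q.1) p.2 q.2

lemma opBlock_sub_smul_one [DecidableEq ι] (B : E →L[ℂ] E) (l : ℂ) (i : ℤ) :
    opBlock e (B - l • 1) i i = opBlock e B i i - l • 1 := by
  ext k m
  simp [opBlock, orthonormal_iff_ite.mp e.orthonormal,
    Matrix.one_apply]

variable [Fintype ι]

/-- `A` is a block weighted shift by `n`: it maps `E_j` to `E_{j+n}` with matrix `S j`, where `E_j`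
is the span of the vectors `e (j, k)` for `k : ι`. -/
def IsBlockShift (n : ℤ) (S : ℤ → Matrix ι ι ℂ) (A : E →L[ℂ] E) : Prop :=
  ∀ j l, A (e (j, l)) = ∑ k, S j k l • e (j + n, k)

namespace IsBlockShift

variable {e} {m n : ℤ} {S S' : ℤ → Matrix ι ι ℂ} {A A' B : E →L[ℂ] E}

lemma one [DecidableEq ι] : IsBlockShift e 0 (fun _ => 1) (1 : E →L[ℂ] E) := fun j l => by
  simp [Matrix.one_apply]

lemma mul (hA' : IsBlockShift e m S' A') (hA : IsBlockShift e n S A) :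
    IsBlockShift e (n + m) (fun j => S' (j + n) * S j) (A' * A) := fun j l => by
  simp only [mul_apply_eq_comp, hA j l, map_sum, map_smul, hA' (j + n), Finset.smul_sum, smul_smul,
    Matrix.mul_apply, Finset.sum_smul, add_assoc]
  rw [Finset.sum_comm]
  simp only [mul_comm]

variable [CompleteSpace E]

lemma adjoint_apply (hA : IsBlockShift e n S A) (j : ℤ) (l : ι) :
    adjoint A (e (j + n, l)) = ∑ k, (S j)ᴴ k l • e (j, k) := by
  classical
  refine eq_of_forall_inner_hilbertBasis_eq e fun ⟨i, m⟩ => ?_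
  rw [adjoint_inner_right, hA i m]
  simp only [sum_inner, inner_sum, inner_smul_left, inner_smul_right,
    orthonormal_iff_ite.mp e.orthonormal, Prod.mk.injEq, add_left_inj]
  by_cases hij : i = j <;> simp [hij]

protected lemma adjoint (hA : IsBlockShift e n S A) :
    IsBlockShift e (-n) (fun j => (S (j - n))ᴴ) (adjoint A) := fun j l => by
  simpa [sub_eq_add_neg] using hA.adjoint_apply (j - n) l

lemma adjoint_mul_self (hA : IsBlockShift e n S A) :
    IsBlockShift e 0 (fun j => (S j)ᴴ * S j) (adjoint A * A) := by
  simpa using hA.adjoint.mul hA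

lemma opBlock_mul_eq_mul_opBlock (hA : IsBlockShift e n S A) (hBA : Commute B A) (i j : ℤ) :
    opBlock e B (i + n) (j + n) * S j = S i * opBlock e B i j := by
  ext k l
  have hentry : ⟪e (i + n, k), B (A (e (j, l)))⟫_ℂ =
      ⟪adjoint A (e (i + n, k)), B (e (j, l))⟫_ℂ := by
    rw [adjoint_inner_left, ← mul_apply_eq_comp, hBA.eq, mul_apply_eq_comp]
  rw [hA j l, hA.adjoint_apply] at hentry
  simpa [opBlock, Matrix.mul_apply, inner_sum, sum_inner, inner_smul_left, inner_smul_right,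
    mul_comm] using hentry

end IsBlockShift

end BlockShift

section TriangularWeights

section Field

variable {𝕜 : Type*} [Field 𝕜] (t d : ℤ → 𝕜)

/-- The coefficient of `e_{j+n}` in `(X T₁ⁿ - T₀ⁿ X) e_j`, where `T₀` and `T₁` are the weighted
shifts with weights `t` and `t⁻¹`, and `X` is the diagonal operator with entries `d`. For `n = 1`
this is the paper's `c_j`. -/
def intertwiningDefect (j : ℤ) (n : ℕ) : 𝕜 :=
  (shiftProd t j n)⁻¹ * d (j + n) - shiftProd t j n * d j

/-- The matrix of `Tⁿ` from block `j` to block `j + n`, where `T` is the upper triangular block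
shift with weights `t`, `t⁻¹` and diagonal intertwiner `d`. -/
def shiftPowMatrix (j : ℤ) (n : ℕ) : Matrix (Fin 2) (Fin 2) 𝕜 :=
  !![shiftProd t j n, intertwiningDefect t d j n; 0, (shiftProd t j n)⁻¹]

variable {t d}

lemma shiftProd_mul_intertwiningDefect (ht : ∀ n, t n ≠ 0) (j : ℤ) (n : ℕ) :
    shiftProd t j n * intertwiningDefect t d j n = d (j + n) - shiftProd t j n ^ 2 * d j := by
  have := shiftProd_ne_zero ht j n
  rw [intertwiningDefect]
  field_simp

lemma intertwiningDefect_add (ht : ∀ n, t n ≠ 0) (j : ℤ) (m n : ℕ) :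
    intertwiningDefect t d j (m + n) = shiftProd t (j + m) n * intertwiningDefect t d j m +
      intertwiningDefect t d (j + m) n * (shiftProd t j m)⁻¹ := by
  have := shiftProd_ne_zero ht j m
  have := shiftProd_ne_zero ht (j + m) n
  simp only [intertwiningDefect, shiftProd_add, Nat.cast_add, add_assoc]
  field_simp
  ring

lemma intertwiningDefect_add_one_eq_zero (ht : ∀ n, t n ≠ 0) {j : ℤ}
    (h : ∀ n, intertwiningDefect t d j n = 0) (n : ℕ) : intertwiningDefect t d (j + n) 1 = 0 := by
  have hadd := intertwiningDefect_add (d := d) ht j n 1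
  rw [h, h, mul_zero, zero_add, zero_eq_mul] at hadd
  exact hadd.resolve_right (inv_ne_zero (shiftProd_ne_zero ht j n))

lemma shiftPowMatrix_zero (j : ℤ) : shiftPowMatrix t d j 0 = 1 := by
  simp [shiftPowMatrix, intertwiningDefect, Matrix.one_fin_two]

lemma shiftPowMatrix_add (ht : ∀ n, t n ≠ 0) (j : ℤ) (m n : ℕ) :
    shiftPowMatrix t d j (m + n) = shiftPowMatrix t d (j + m) n * shiftPowMatrix t d j m := by
  simp [shiftPowMatrix, intertwiningDefect_add ht, shiftProd_add, mul_comm]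

lemma det_shiftPowMatrix (ht : ∀ n, t n ≠ 0) (j : ℤ) (n : ℕ) :
    (shiftPowMatrix t d j n).det = 1 := by
  simp [shiftPowMatrix, Matrix.det_fin_two, shiftProd_ne_zero ht j n]

end Field

lemma IsBlockShift.shiftPowMatrix_pow {E : Type*} [NormedAddCommGroup E] [InnerProductSpace ℂ E]
    {e : HilbertBasis (ℤ × Fin 2) ℂ E} {t d : ℤ → ℂ} (ht : ∀ n, t n ≠ 0) {A : E →L[ℂ] E}
    (hA : IsBlockShift e 1 (fun j => shiftPowMatrix t d j 1) A) (n : ℕ) :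
    IsBlockShift e n (fun j => shiftPowMatrix t d j n) (A ^ n) := by
  induction n with
  | zero => simpa [shiftPowMatrix_zero] using IsBlockShift.one (e := e)
  | succ n ih => simpa [pow_succ', shiftPowMatrix_add ht] using hA.mul ih

section RCLike

variable {𝕜 : Type*} [RCLike 𝕜] {t d : ℤ → 𝕜}

variable (t d) in
/-- The matrix on block `j` of the positive operator `(Tⁿ)* Tⁿ`, which preserves every block. -/
def shiftPowGram (j : ℤ) (n : ℕ) : Matrix (Fin 2) (Fin 2) 𝕜 :=
  (shiftPowMatrix t d j n)ᴴ * shiftPowMatrix t d j n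

variable (t d) in
/-- The trace of `shiftPowGram t d j n` multiplied by `‖shiftProd t j n‖ ^ 2`, which makes it
converge to `1 + ‖d (j + n)‖ ^ 2` when `shiftProd t j n` tends to zero. -/
def scaledTrace (j : ℤ) (n : ℕ) : ℝ :=
  ‖shiftProd t j n‖ ^ 4 + ‖shiftProd t j n * intertwiningDefect t d j n‖ ^ 2 + 1

lemma shiftPowGram_eq (j : ℤ) (n : ℕ) :
    shiftPowGram t d j n =
      !![star (shiftProd t j n) * shiftProd t j n,
          star (shiftProd t j n) * intertwiningDefect t d j n;
        star (intertwiningDefect t d j n) * shiftProd t j n,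
          star (intertwiningDefect t d j n) * intertwiningDefect t d j n +
            (star (shiftProd t j n))⁻¹ * (shiftProd t j n)⁻¹] := by
  simp [shiftPowGram, shiftPowMatrix, ← Matrix.ext_iff, Fin.forall_fin_two, Matrix.mul_apply]

lemma sq_norm_mul_trace_shiftPowGram (ht : ∀ n, t n ≠ 0) (j : ℤ) (n : ℕ) :
    (‖shiftProd t j n‖ : 𝕜) ^ 2 * (shiftPowGram t d j n).trace = scaledTrace t d j n := by
  have hτ : (‖shiftProd t j n‖ : 𝕜) ≠ 0 := by simpa using shiftProd_ne_zero ht j n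
  have htrace : (shiftPowGram t d j n).trace = (‖shiftProd t j n‖ : 𝕜) ^ 2 +
      (‖intertwiningDefect t d j n‖ : 𝕜) ^ 2 + ((‖shiftProd t j n‖ : 𝕜) ^ 2)⁻¹ := by
    simp [shiftPowGram_eq, Matrix.trace_fin_two, RCLike.conj_mul, ← mul_inv, add_assoc]
  rw [htrace, scaledTrace]
  push_cast [norm_mul]
  field_simp

lemma mul_scaledTrace_le_of_trace_eq (ht : ∀ n, t n ≠ 0) {i j : ℤ} {n : ℕ} {r : ℝ} (hr : 0 ≤ r)
    (hle : r * ‖shiftProd t i n‖ ≤ ‖shiftProd t j n‖)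
    (htrace : (shiftPowGram t d i n).trace = (shiftPowGram t d j n).trace) :
    r ^ 2 * scaledTrace t d i n ≤ scaledTrace t d j n := by
  have hcross : ‖shiftProd t j n‖ ^ 2 * scaledTrace t d i n =
      ‖shiftProd t i n‖ ^ 2 * scaledTrace t d j n := by
    rw [← RCLike.ofReal_inj (K := 𝕜)]
    simp only [RCLike.ofReal_mul, RCLike.ofReal_pow, ← sq_norm_mul_trace_shiftPowGram ht, htrace]
    ring
  have hpos : 0 < ‖shiftProd t i n‖ ^ 2 := pow_pos (norm_pos_iff.mpr (shiftProd_ne_zero ht i n)) 2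
  refine le_of_mul_le_mul_left ?_ hpos
  calc ‖shiftProd t i n‖ ^ 2 * (r ^ 2 * scaledTrace t d i n)
      = (r * ‖shiftProd t i n‖) ^ 2 * scaledTrace t d i n := by ring
    _ ≤ ‖shiftProd t j n‖ ^ 2 * scaledTrace t d i n := by
        unfold scaledTrace
        gcongr
    _ = ‖shiftProd t i n‖ ^ 2 * scaledTrace t d j n := hcross

lemma tendsto_shiftProd_mul_intertwiningDefect_sub (ht : ∀ n, t n ≠ 0) {j : ℤ}
    (hτ : Tendsto (shiftProd t j) atTop (𝓝 0)) :
    Tendsto (fun n : ℕ => shiftProd t j n * intertwiningDefect t d j n - d (j + n))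
      atTop (𝓝 0) := by
  simpa [shiftProd_mul_intertwiningDefect ht] using ((hτ.pow 2).mul_const (d j)).neg

lemma isBoundedUnder_norm_shiftProd_mul_intertwiningDefect (ht : ∀ n, t n ≠ 0) {C : ℝ}
    (hd : ∀ n, ‖d n‖ ≤ C) {j : ℤ} (hτ : Tendsto (shiftProd t j) atTop (𝓝 0)) :
    IsBoundedUnder (· ≤ ·) atTop fun n => ‖shiftProd t j n * intertwiningDefect t d j n‖ := by
  have hdiff := (tendsto_shiftProd_mul_intertwiningDefect_sub (d := d) ht hτ).norm.add_const C
  refine hdiff.isBoundedUnder_le.mono_le (Eventually.of_forall fun n => ?_)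
  exact (norm_le_norm_sub_add _ (d (j + n))).trans (add_le_add le_rfl (hd _))

lemma tendsto_scaledTrace_sub (ht : ∀ n, t n ≠ 0) {C : ℝ} (hd : ∀ n, ‖d n‖ ≤ C) {j : ℤ}
    (hτ : Tendsto (shiftProd t j) atTop (𝓝 0)) :
    Tendsto (fun n : ℕ => scaledTrace t d j n - (1 + ‖d (j + n)‖ ^ 2)) atTop (𝓝 0) := by
  have hsum := (hτ.norm.pow 4).add (tendsto_sq_norm_sub_sq_norm (fun n : ℕ => hd (j + n))
    (tendsto_shiftProd_mul_intertwiningDefect_sub ht hτ))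
  simp only [norm_zero, zero_pow, ne_eq, OfNat.ofNat_ne_zero, not_false_eq_true, add_zero] at hsum
  refine hsum.congr fun n => ?_
  rw [scaledTrace]
  ring

lemma exists_trace_shiftPowGram_ne (ht : ∀ n, t n ≠ 0) {N : ℤ}
    (hmono : StrictMonoOn (fun n => ‖t n‖) (Set.Ici N))
    (hτ : ∀ j, Tendsto (shiftProd t j) atTop (𝓝 0)) {C : ℝ} (hd : ∀ n, ‖d n‖ ≤ C) {j : ℤ}
    (hj : N ≤ j) {k : ℕ} (hk : 0 < k) :
    ∃ n, (shiftPowGram t d j n).trace ≠ (shiftPowGram t d (j + k) n).trace := by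
  by_contra! htrace
  obtain ⟨r, hr1, hr⟩ := exists_one_lt_forall_mul_shiftProd_le (fun n => norm_pos_iff.mpr (ht n))
    hmono hj hk
  have hscaled : ∀ᶠ n : ℕ in atTop, r ^ 2 * scaledTrace t d j n ≤ scaledTrace t d (j + k) n := by
    filter_upwards [eventually_ge_atTop 1] with n hn
    refine mul_scaledTrace_le_of_trace_eq ht (zero_le_one.trans hr1.le) ?_ (htrace n)
    simpa only [norm_shiftProd] using hr n hn
  obtain ⟨s, hs1, hsr⟩ := exists_between (one_lt_pow₀ hr1 two_ne_zero)
  have hgrowth := eventually_mul_le_of_tendsto_sub hsr (fun n => by simp)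
    (tendsto_scaledTrace_sub ht hd (hτ j)) (tendsto_scaledTrace_sub ht hd (hτ (j + k))) hscaled
  refine not_bddAbove_range_of_eventually_mul_le (u := fun n : ℕ => 1 + ‖d (j + n)‖ ^ 2) (k := k)
    hs1 (fun n => by positivity) ?_ ⟨1 + C ^ 2, ?_⟩
  · simpa [add_assoc, add_comm (k : ℤ)] using hgrowth
  rintro _ ⟨n, rfl⟩
  change 1 + ‖d (j + n)‖ ^ 2 ≤ 1 + C ^ 2
  gcongr
  exact hd _

lemma sq_norm_mul_det_mulVec_shiftPowGram (ht : ∀ n, t n ≠ 0) (v : Fin 2 → 𝕜) (j : ℤ) (n : ℕ) :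
    (‖shiftProd t j n‖ : 𝕜) ^ 2 * (Matrix.of ![v, shiftPowGram t d j n *ᵥ v]).det =
      (1 + (‖shiftProd t j n * intertwiningDefect t d j n‖ : 𝕜) ^ 2 -
        (‖shiftProd t j n‖ : 𝕜) ^ 4) * (v 0 * v 1) -
      (star (shiftProd t j n) ^ 2 * (shiftProd t j n * intertwiningDefect t d j n) * v 1 ^ 2 -
        shiftProd t j n ^ 2 * star (shiftProd t j n * intertwiningDefect t d j n) * v 0 ^ 2) := by
  have hτ := shiftProd_ne_zero ht j n
  have hτ' : star (shiftProd t j n) ≠ 0 := star_ne_zero.mpr hτ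
  have hpow : (‖shiftProd t j n‖ : 𝕜) ^ 4 = ((‖shiftProd t j n‖ : 𝕜) ^ 2) ^ 2 := by ring
  have hdet : (Matrix.of ![v, shiftPowGram t d j n *ᵥ v]).det =
      v 0 * (star (intertwiningDefect t d j n) * shiftProd t j n * v 0 +
        (star (intertwiningDefect t d j n) * intertwiningDefect t d j n +
          (star (shiftProd t j n))⁻¹ * (shiftProd t j n)⁻¹) * v 1) -
      v 1 * (star (shiftProd t j n) * shiftProd t j n * v 0 +
        star (shiftProd t j n) * intertwiningDefect t d j n * v 1) := by
    simp [shiftPowGram_eq, Matrix.det_fin_two, dotProduct]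
  simp only [hdet, hpow, ← RCLike.conj_mul, ← RCLike.star_def, star_mul']
  field_simp
  ring

lemma eq_zero_of_tendsto_zero_of_one_add_sq_norm_sub_mul_eq {x y : ℕ → 𝕜} {p q r : 𝕜}
    (hx : Tendsto x atTop (𝓝 0)) (hy : IsBoundedUnder (· ≤ ·) atTop fun n => ‖y n‖)
    (h : ∀ n, (1 + (‖y n‖ : 𝕜) ^ 2 - (‖x n‖ : 𝕜) ^ 4) * p =
      star (x n) ^ 2 * y n * q - x n ^ 2 * star (y n) * r) : p = 0 := by
  have hxnorm : Tendsto (fun n => (‖x n‖ : 𝕜) ^ 4 * p) atTop (𝓝 0) := by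
    have : Tendsto (fun n => (‖x n‖ : 𝕜)) atTop (𝓝 0) :=
      tendsto_zero_iff_norm_tendsto_zero.mpr (by simpa using hx.norm)
    simpa using (this.pow 4).mul_const p
  have hxy : Tendsto (fun n => star (x n) ^ 2 * y n * q) atTop (𝓝 0) := by
    have : Tendsto (fun n => star (x n) ^ 2) atTop (𝓝 0) := by simpa using hx.star.pow 2
    simpa using (this.zero_mul_isBoundedUnder_le hy).mul_const q
  have hxy' : Tendsto (fun n => x n ^ 2 * star (y n) * r) atTop (𝓝 0) := by
    have : Tendsto (fun n => x n ^ 2) atTop (𝓝 0) := by simpa using hx.pow 2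
    have hy' : IsBoundedUnder (· ≤ ·) atTop fun n => ‖star (y n)‖ := by simpa using hy
    simpa using (this.zero_mul_isBoundedUnder_le hy').mul_const r
  have hlim := ((hxy.sub hxy').add hxnorm).norm
  simp only [sub_zero, add_zero, norm_zero] at hlim
  refine norm_le_zero_iff.mp (ge_of_tendsto' hlim fun n => ?_)
  have hsum : star (x n) ^ 2 * y n * q - x n ^ 2 * star (y n) * r + (‖x n‖ : 𝕜) ^ 4 * p =
      ((1 + ‖y n‖ ^ 2 : ℝ) : 𝕜) * p := by
    rw [← h n]
    push_cast
    ring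
  rw [hsum, norm_mul, RCLike.norm_ofReal, abs_of_pos (by positivity)]
  exact le_mul_of_one_le_left (norm_nonneg p) (by simp)

lemma intertwiningDefect_eq_zero_of_det_eq_zero (ht : ∀ n, t n ≠ 0) {C : ℝ}
    (hd : ∀ n, ‖d n‖ ≤ C) {j : ℤ} (hτ : Tendsto (shiftProd t j) atTop (𝓝 0)) {v : Fin 2 → 𝕜}
    (hv : v ≠ 0) (h : ∀ n, (Matrix.of ![v, shiftPowGram t d j n *ᵥ v]).det = 0) (n : ℕ) :
    intertwiningDefect t d j n = 0 := by
  set γ : ℕ → 𝕜 := fun n => shiftProd t j n * intertwiningDefect t d j n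
  have hparallel : ∀ n, (1 + (‖γ n‖ : 𝕜) ^ 2 - (‖shiftProd t j n‖ : 𝕜) ^ 4) * (v 0 * v 1) =
      star (shiftProd t j n) ^ 2 * γ n * v 1 ^ 2 - shiftProd t j n ^ 2 * star (γ n) * v 0 ^ 2 := by
    intro n
    rw [← sub_eq_zero, ← sq_norm_mul_det_mulVec_shiftPowGram ht, h, mul_zero]
  have hv01 : v 0 * v 1 = 0 :=
    eq_zero_of_tendsto_zero_of_one_add_sq_norm_sub_mul_eq hτ
      (isBoundedUnder_norm_shiftProd_mul_intertwiningDefect ht hd hτ) hparallel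
  have hγ0 : γ n = 0 := by
    have hγn := hparallel n
    rw [hv01, mul_zero] at hγn
    rcases mul_eq_zero.mp hv01 with h0 | h1
    · have h1 : v 1 ≠ 0 := fun h1 => hv (by ext i; fin_cases i <;> assumption)
      simpa [h0, h1, shiftProd_ne_zero ht j n] using hγn
    · have h0 : v 0 ≠ 0 := fun h0 => hv (by ext i; fin_cases i <;> assumption)
      simpa [h0, h1, shiftProd_ne_zero ht j n] using hγn
  exact (mul_eq_zero.mp hγ0).resolve_left (shiftProd_ne_zero ht j n)

end RCLike

end TriangularWeights

section TriangularBlockShift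

lemma matrix_eq_zero_of_forall_mulVec_eq_zero {R ι κ : Type*} [CommRing R] [NoZeroDivisors R]
    [Fintype κ] [DecidableEq κ] {Q : Matrix ι κ R} {v : κ → κ → R} (hv : (Matrix.of v).det ≠ 0)
    (hQ : ∀ k, Q *ᵥ v k = 0) : Q = 0 :=
  funext fun i => Matrix.eq_zero_of_mulVec_eq_zero hv <| funext fun k => by
    simpa [Matrix.mulVec, dotProduct_comm] using congrFun (hQ k) i

variable {E : Type*} [NormedAddCommGroup E] [InnerProductSpace ℂ E] [CompleteSpace E]
  {e : HilbertBasis (ℤ × Fin 2) ℂ E} {t d : ℤ → ℂ} {A B : E →L[ℂ] E}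

lemma opBlock_mul_shiftPowGram (ht : ∀ n, t n ≠ 0)
    (hA : IsBlockShift e 1 (fun j => shiftPowMatrix t d j 1) A) (hBA : Commute B A)
    (hBA' : Commute B (adjoint A)) (i j : ℤ) (n : ℕ) :
    opBlock e B i j * shiftPowGram t d j n = shiftPowGram t d i n * opBlock e B i j := by
  have hcomm : Commute B (adjoint (A ^ n) * A ^ n) := by
    rw [← star_eq_adjoint, star_pow, star_eq_adjoint]
    exact (hBA'.pow_right n).mul_right (hBA.pow_right n)
  have hgram := (hA.shiftPowMatrix_pow ht n).adjoint_mul_self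
  simpa [shiftPowGram] using hgram.opBlock_mul_eq_mul_opBlock hcomm i j

lemma det_opBlock_add (ht : ∀ n, t n ≠ 0)
    (hA : IsBlockShift e 1 (fun j => shiftPowMatrix t d j 1) A) (hBA : Commute B A) (i j s : ℤ) :
    (opBlock e B (i + s) (j + s)).det = (opBlock e B i j).det := by
  have hper : Function.Periodic (fun s : ℤ => (opBlock e B (i + s) (j + s)).det) 1 := by
    intro s
    have := congrArg Matrix.det (hA.opBlock_mul_eq_mul_opBlock hBA (i + s) (j + s))
    simpa [det_shiftPowMatrix ht, add_assoc] using this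
  simpa using hper.int_mul_eq s

lemma det_opBlock_eq_zero_of_ne (ht : ∀ n, t n ≠ 0) {N : ℤ}
    (hmono : StrictMonoOn (fun n => ‖t n‖) (Set.Ici N))
    (hτ : ∀ j, Tendsto (shiftProd t j) atTop (𝓝 0)) {C : ℝ} (hd : ∀ n, ‖d n‖ ≤ C)
    (hA : IsBlockShift e 1 (fun j => shiftPowMatrix t d j 1) A) (hBA : Commute B A)
    (hBA' : Commute B (adjoint A)) {i j : ℤ} (hij : i ≠ j) : (opBlock e B i j).det = 0 := by
  by_contra hdet
  obtain ⟨s, hi, hj⟩ : ∃ s, N ≤ i + s ∧ N ≤ j + s := ⟨N - min i j, by omega, by omega⟩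
  have hunit : IsUnit (opBlock e B (i + s) (j + s)) := by
    rwa [Matrix.isUnit_iff_isUnit_det, det_opBlock_add ht hA hBA, isUnit_iff_ne_zero]
  have htrace : ∀ n, (shiftPowGram t d (j + s) n).trace = (shiftPowGram t d (i + s) n).trace := by
    intro n
    rw [← Matrix.trace_conj hunit, opBlock_mul_shiftPowGram ht hA hBA hBA',
      Matrix.mul_nonsing_inv_cancel_right _ _ ((Matrix.isUnit_iff_isUnit_det _).mp hunit)]
  rcases lt_or_gt_of_ne hij with h | h
  · obtain ⟨k, hk⟩ := Int.le.dest h.le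
    obtain ⟨n, hn⟩ := exists_trace_shiftPowGram_ne ht hmono hτ hd hi (k := k) (by omega)
    exact hn (by rw [← htrace]; congr 2; omega)
  · obtain ⟨k, hk⟩ := Int.le.dest h.le
    obtain ⟨n, hn⟩ := exists_trace_shiftPowGram_ne ht hmono hτ hd hj (k := k) (by omega)
    exact hn (by rw [htrace]; congr 2; omega)

lemma opBlock_eq_zero_of_det_eq_zero (ht : ∀ n, t n ≠ 0) {C : ℝ} (hd : ∀ n, ‖d n‖ ≤ C)
    (hA : IsBlockShift e 1 (fun j => shiftPowMatrix t d j 1) A) (hBA : Commute B A)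
    (hBA' : Commute B (adjoint A)) {i j : ℤ} (hτ : Tendsto (shiftProd t j) atTop (𝓝 0)) {n : ℕ}
    (hn : intertwiningDefect t d j n ≠ 0) (hdet : (opBlock e B i j).det = 0) :
    opBlock e B i j = 0 := by
  obtain ⟨v, hv0, hv⟩ := Matrix.exists_mulVec_eq_zero_iff.mpr hdet
  obtain ⟨m, hm⟩ : ∃ m, (Matrix.of ![v, shiftPowGram t d j m *ᵥ v]).det ≠ 0 := by
    by_contra! h
    exact hn (intertwiningDefect_eq_zero_of_det_eq_zero ht hd hτ hv0 h n)
  refine matrix_eq_zero_of_forall_mulVec_eq_zero hm (Fin.forall_fin_two.mpr ⟨hv, ?_⟩)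
  change opBlock e B i j *ᵥ (shiftPowGram t d j m *ᵥ v) = 0
  rw [Matrix.mulVec_mulVec, opBlock_mul_shiftPowGram ht hA hBA hBA', ← Matrix.mulVec_mulVec, hv,
    Matrix.mulVec_zero]

lemma opBlock_add_natCast_eq_zero (ht : ∀ n, t n ≠ 0)
    (hA : IsBlockShift e 1 (fun j => shiftPowMatrix t d j 1) A) (hBA : Commute B A) {i j : ℤ}
    (h : opBlock e B i j = 0) (n : ℕ) : opBlock e B (i + n) (j + n) = 0 := by
  have hunit : IsUnit (shiftPowMatrix t d j n) := by
    simp [Matrix.isUnit_iff_isUnit_det, det_shiftPowMatrix ht]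
  rw [← hunit.mul_left_eq_zero,
    (hA.shiftPowMatrix_pow ht n).opBlock_mul_eq_mul_opBlock (hBA.pow_right n), h, mul_zero]

lemma eq_zero_of_det_opBlock_zero_eq_zero (ht : ∀ n, t n ≠ 0) {N : ℤ}
    (hmono : StrictMonoOn (fun n => ‖t n‖) (Set.Ici N))
    (hτ : ∀ j, Tendsto (shiftProd t j) atTop (𝓝 0)) {C : ℝ} (hd : ∀ n, ‖d n‖ ≤ C)
    (hA : IsBlockShift e 1 (fun j => shiftPowMatrix t d j 1) A) (hBA : Commute B A)
    (hBA' : Commute B (adjoint A)) {m : ℤ} (hm : intertwiningDefect t d m 1 ≠ 0)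
    (h0 : (opBlock e B 0 0).det = 0) : B = 0 := by
  have hdet : ∀ i j, (opBlock e B i j).det = 0 := by
    intro i j
    rcases eq_or_ne i j with rfl | hij
    · simpa [h0] using det_opBlock_add ht hA hBA 0 0 i
    · exact det_opBlock_eq_zero_of_ne ht hmono hτ hd hA hBA hBA' hij
  have hleft : ∀ i j, j ≤ m → opBlock e B i j = 0 := by
    intro i j hj
    obtain ⟨k, rfl⟩ := Int.le.dest hj
    obtain ⟨n, hn⟩ : ∃ n, intertwiningDefect t d j n ≠ 0 := by
      by_contra! h
      exact hm (intertwiningDefect_add_one_eq_zero ht h k)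
    exact opBlock_eq_zero_of_det_eq_zero ht hd hA hBA hBA' (hτ j) hn (hdet i j)
  refine eq_zero_of_forall_opBlock_eq_zero e fun i j => ?_
  rcases le_total j m with hj | hj
  · exact hleft i j hj
  · obtain ⟨k, rfl⟩ := Int.le.dest hj
    simpa using opBlock_add_natCast_eq_zero ht hA hBA (hleft (i - k) m le_rfl) k

theorem isIrreducibleOp_of_isBlockShift_shiftPowMatrix (ht : ∀ n, t n ≠ 0) {N : ℤ}
    (hmono : StrictMonoOn (fun n => ‖t n‖) (Set.Ici N))
    (hτ : ∃ j, Tendsto (shiftProd t j) atTop (𝓝 0)) (hd : ∃ C, ∀ n, ‖d n‖ ≤ C)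
    (hA : IsBlockShift e 1 (fun j => shiftPowMatrix t d j 1) A)
    (hdefect : ∃ m, intertwiningDefect t d m 1 ≠ 0) : IsIrreducibleOp A := by
  obtain ⟨j, hτj⟩ := hτ
  obtain ⟨C, hC⟩ := hd
  obtain ⟨m, hm⟩ := hdefect
  refine isIrreducibleOp_of_commutant_scalar fun B hBA hBA' => ?_
  obtain ⟨l, hl⟩ : (spectrum ℂ (opBlock e B 0 0)).Nonempty :=
    spectrum.nonempty_of_isAlgClosed_of_finiteDimensional ℂ _
  refine ⟨l, sub_eq_zero.mp <| eq_zero_of_det_opBlock_zero_eq_zero (e := e) ht hmono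
    (tendsto_shiftProd_of_tendsto_shiftProd ht hτj) hC hA
    (hBA.sub_left ((Commute.one_left A).smul_left l))
    (hBA'.sub_left ((Commute.one_left _).smul_left l)) hm ?_⟩
  rw [opBlock_sub_smul_one]
  by_contra hdet
  rw [spectrum.mem_iff, IsUnit.sub_iff, Matrix.isUnit_iff_isUnit_det, isUnit_iff_ne_zero] at hl
  exact hl (by simpa [Algebra.algebraMap_eq_smul_one] using hdet)

end TriangularBlockShift

section ProductBasis

variable {κ H : Type*} [NormedAddCommGroup H] [InnerProductSpace ℂ H] (b : HilbertBasis κ ℂ H)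

/-- The family `(b i, 0)`, `(0, b i)` in `H ⊕ H`, indexed by `(i, 0)` and `(i, 1)`. -/
def prodFamily (p : κ × Fin 2) : WithLp 2 (H × H) :=
  ![WithLp.toLp 2 (b p.1, 0), WithLp.toLp 2 (0, b p.1)] p.2

lemma orthonormal_prodFamily : Orthonormal ℂ (prodFamily b) := by
  classical
  refine orthonormal_iff_ite.mpr ?_
  rintro ⟨i, k⟩ ⟨j, l⟩
  fin_cases k <;> fin_cases l <;>
    simp [prodFamily, orthonormal_iff_ite.mp b.orthonormal, Prod.mk.injEq]

lemma span_range_prodFamily_orthogonal :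
    (Submodule.span ℂ (Set.range (prodFamily b)))ᗮ = ⊥ := by
  refine (Submodule.eq_bot_iff _).mpr fun z hz => ?_
  have hinner : ∀ p, ⟪prodFamily b p, z⟫_ℂ = 0 := fun p =>
    (Submodule.mem_orthogonal _ z).mp hz _ (Submodule.subset_span ⟨p, rfl⟩)
  refine WithLp.ofLp_injective 2 (Prod.ext ?_ ?_)
  · exact eq_of_forall_inner_hilbertBasis_eq b fun i => by simpa [prodFamily] using hinner (i, 0)
  · exact eq_of_forall_inner_hilbertBasis_eq b fun i => by simpa [prodFamily] using hinner (i, 1)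

variable [CompleteSpace H]

/-- The Hilbert basis of `H ⊕ H` consisting of the vectors `(b i, 0)` and `(0, b i)`. -/
def prodHilbertBasis : HilbertBasis (κ × Fin 2) ℂ (WithLp 2 (H × H)) :=
  .mkOfOrthogonalEqBot (orthonormal_prodFamily b) (span_range_prodFamily_orthogonal b)

@[simp]
lemma prodHilbertBasis_apply_zero (i : κ) :
    prodHilbertBasis b (i, 0) = WithLp.toLp 2 (b i, 0) := by
  simp [prodHilbertBasis, prodFamily]

@[simp]
lemma prodHilbertBasis_apply_one (i : κ) :
    prodHilbertBasis b (i, 1) = WithLp.toLp 2 (0, b i) := by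
  simp [prodHilbertBasis, prodFamily]

end ProductBasis

section BlockOperator

variable {H : Type*} [NormedAddCommGroup H] [InnerProductSpace ℂ H]
  {b : HilbertBasis ℤ ℂ H} {t d : ℤ → ℂ} {T0 T1 X : H →L[ℂ] H}

lemma norm_eigenvalue_le_opNorm {κ : Type*} {b : HilbertBasis κ ℂ H} {d : κ → ℂ}
    (hX : ∀ n, X (b n) = d n • b n) (n : κ) : ‖d n‖ ≤ ‖X‖ := by
  simpa [hX, norm_smul, b.orthonormal.1 n] using X.le_opNorm (b n)

lemma exists_intertwiningDefect_ne_zero (hT0 : ∀ n, T0 (b n) = t n • b (n + 1))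
    (hT1 : ∀ n, T1 (b n) = (t n)⁻¹ • b (n + 1)) (hX : ∀ n, X (b n) = d n • b n)
    (hXT : X.comp T1 ≠ T0.comp X) : ∃ m, intertwiningDefect t d m 1 ≠ 0 := by
  by_contra! h
  refine hXT (eq_of_forall_hilbertBasis_eq b fun n => ?_)
  have hn : (t n)⁻¹ * d (n + 1) = t n * d n := by
    simpa [intertwiningDefect, sub_eq_zero] using h n
  simp [hT0, hT1, hX, smul_smul, hn, mul_comm]

variable [CompleteSpace H]

lemma isBlockShift_blockT2 (hT0 : ∀ n, T0 (b n) = t n • b (n + 1))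
    (hT1 : ∀ n, T1 (b n) = (t n)⁻¹ • b (n + 1)) (hX : ∀ n, X (b n) = d n • b n) :
    IsBlockShift (prodHilbertBasis b) 1 (fun j => shiftPowMatrix t d j 1) (blockT2 T0 T1 X) := by
  intro j l
  apply WithLp.ofLp_injective 2
  fin_cases l
  · simp [blockT2, shiftPowMatrix, hT0]
  · simp [blockT2, shiftPowMatrix, intertwiningDefect, hT0, hT1, hX, smul_smul, sub_smul, mul_comm]

theorem isIrreducibleOp_blockT2 (ht : ∀ n, t n ≠ 0) {N : ℤ}
    (hmono : StrictMonoOn (fun n => ‖t n‖) (Set.Ici N))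
    (hτ : ∃ j, Tendsto (shiftProd t j) atTop (𝓝 0)) (hT0 : ∀ n, T0 (b n) = t n • b (n + 1))
    (hT1 : ∀ n, T1 (b n) = (t n)⁻¹ • b (n + 1)) (hX : ∀ n, X (b n) = d n • b n)
    (hXT : X.comp T1 ≠ T0.comp X) : IsIrreducibleOp (blockT2 T0 T1 X) :=
  isIrreducibleOp_of_isBlockShift_shiftPowMatrix ht hmono hτ ⟨‖X‖, norm_eigenvalue_le_opNorm hX⟩
    (isBlockShift_blockT2 hT0 hT1 hX) (exists_intertwiningDefect_ne_zero hT0 hT1 hX hXT)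

end BlockOperator

/-- The vectors `eb n` as a Hilbert basis of `ℓ²(ℤ)`. -/
def ebBasis : HilbertBasis ℤ ℂ Hl := .ofRepr (.refl ℂ Hl)

lemma ebBasis_apply (n : ℤ) : ebBasis n = eb n := by
  rw [← HilbertBasis.repr_symm_single]
  rfl

section SqrtWeights

variable {a b : ℝ}

lemma intCast_add_div_intCast_add_pos (ha0 : 0 < a) (ha1 : a < 1) (hb0 : 0 < b) (hb1 : b < 1)
    (n : ℤ) : 0 < ((n : ℝ) + a) / (n + b) := by
  rcases le_or_gt 0 n with hn | hn
  · have : (0 : ℝ) ≤ n := mod_cast hn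
    positivity
  · have : (n : ℝ) ≤ -1 := mod_cast Int.le_sub_one_of_lt hn
    exact div_pos_of_neg_of_neg (by linarith) (by linarith)

lemma add_div_add_eq_one_sub {x : ℝ} (hx : x + b ≠ 0) :
    (x + a) / (x + b) = 1 - (b - a) / (x + b) := by
  rw [eq_sub_iff_add_eq, ← add_div, div_eq_one_iff_eq hx]
  ring

lemma strictMonoOn_add_div_add (hb : 0 < b) (hab : a < b) :
    StrictMonoOn (fun x : ℝ => (x + a) / (x + b)) (Set.Ici 0) := by
  intro x hx y hy hxy
  rw [Set.mem_Ici] at hx hy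
  simp only [add_div_add_eq_one_sub (add_pos_of_nonneg_of_pos hx hb).ne',
    add_div_add_eq_one_sub (add_pos_of_nonneg_of_pos hy hb).ne']
  have := sub_pos.mpr hab
  gcongr

lemma tendsto_prod_add_div_add_zero (ha : 0 ≤ a) (hab : a < b) :
    Tendsto (fun n => ∏ m ∈ Finset.range n, ((m : ℝ) + a) / (m + b)) atTop (𝓝 0) := by
  have hpos : ∀ m : ℕ, 0 < (m : ℝ) + b := fun m =>
    add_pos_of_nonneg_of_pos m.cast_nonneg (ha.trans_lt hab)
  have hnot_summable : ¬ Summable fun m : ℕ => (b - a) / ((m : ℝ) + b) := by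
    have := (Real.summable_one_div_nat_add_rpow b 1).not.mpr (lt_irrefl 1)
    simpa [div_eq_mul_inv, summable_mul_left_iff (sub_pos.mpr hab).ne', abs_of_pos (hpos _)]
      using this
  simp only [add_div_add_eq_one_sub (hpos _).ne']
  refine tendsto_prod_one_sub_zero (fun m => div_nonneg (sub_nonneg.mpr hab.le) (hpos m).le)
    (fun m => ?_) hnot_summable
  rw [div_le_one (hpos m)]
  have : (0 : ℝ) ≤ m := m.cast_nonneg
  linarith

/-- The weights `√((n + a) / (n + b))` of the paper. -/
def sqrtWeight (a b : ℝ) (n : ℤ) : ℝ := Real.sqrt ((n + a) / (n + b))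

lemma sqrtWeight_pos (ha0 : 0 < a) (ha1 : a < 1) (hb0 : 0 < b) (hb1 : b < 1) (n : ℤ) :
    0 < sqrtWeight a b n :=
  Real.sqrt_pos.mpr (intCast_add_div_intCast_add_pos ha0 ha1 hb0 hb1 n)

lemma strictMonoOn_sqrtWeight (ha : 0 ≤ a) (hab : a < b) :
    StrictMonoOn (sqrtWeight a b) (Set.Ici 0) := by
  intro m hm n hn hmn
  have hm' : (0 : ℝ) ≤ m := mod_cast hm
  have hn' : (0 : ℝ) ≤ n := mod_cast hn
  have hb := ha.trans_lt hab
  exact Real.sqrt_lt_sqrt (by positivity)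
    (strictMonoOn_add_div_add hb hab hm' hn' (Int.cast_lt.mpr hmn))

lemma tendsto_shiftProd_sqrtWeight (ha : 0 ≤ a) (hab : a < b) :
    Tendsto (shiftProd (sqrtWeight a b) 0) atTop (𝓝 0) := by
  have hsqrt := (tendsto_prod_add_div_add_zero ha hab).sqrt
  rw [Real.sqrt_zero] at hsqrt
  refine hsqrt.congr fun n => ?_
  have hb := ha.trans_lt hab
  rw [Real.sqrt_prod _ fun m _ => by positivity]
  simp [shiftProd, sqrtWeight]

end SqrtWeights

theorem irreducibility_example_sqrt_weights_general {a b : ℝ} (ha : 0 < a) (hab : a < b)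
    (hb : b < 1) {d : ℤ → ℂ} {t : ℤ → ℝ}
    (htdef : ∀ n : ℤ, t n = Real.sqrt (((n : ℝ) + a) / ((n : ℝ) + b)))
    {T0 T1 X : Hl →L[ℂ] Hl} (hT0 : ∀ n : ℤ, T0 (eb n) = (t n : ℂ) • eb (n + 1))
    (hT1 : ∀ n : ℤ, T1 (eb n) = ((t n : ℂ))⁻¹ • eb (n + 1))
    (hX : ∀ n : ℤ, X (eb n) = d n • eb n) (hXT : X.comp T1 ≠ T0.comp X) :
    IsIrreducibleOp (blockT T0 T1 X) := by
  obtain rfl : t = sqrtWeight a b := funext htdef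
  have ht := sqrtWeight_pos ha (hab.trans hb) (ha.trans hab) hb
  simp only [← ebBasis_apply] at hT0 hT1 hX
  refine isIrreducibleOp_blockT2 (N := 0) (fun n => ofReal_ne_zero.mpr (ht n).ne') ?_ ⟨0, ?_⟩
    hT0 hT1 hX hXT
  · simpa only [norm_real, Real.norm_of_nonneg (ht _).le] using strictMonoOn_sqrtWeight ha.le hab
  · rw [tendsto_zero_iff_norm_tendsto_zero]
    simpa only [norm_shiftProd, norm_real, Real.norm_of_nonneg (ht _).le] using
      tendsto_shiftProd_sqrtWeight ha.le hab

/-- Example 3.5: irreducibility of `T(√((n+a)/(n+b)), dₙ)`. -/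
theorem irreducibility_example_sqrt_weights
    (a b : ℝ) (ha : 0 < a) (hab : a < b) (hb : b < 1) (hsum : a + b = 1)
    (d : ℤ → ℝ) (hdpos : ∀ n, 0 < d n) (hdb : ∃ C : ℝ, ∀ n, d n ≤ C)
    (t : ℤ → ℝ) (htdef : ∀ n : ℤ, t n = Real.sqrt (((n : ℝ) + a) / ((n : ℝ) + b)))
    (c : ℤ → ℝ) (hcdef : ∀ n : ℤ,
      c n = Real.sqrt (((n : ℝ) + 1 - a) / ((n : ℝ) + 1 - b)) * d (n + 1) -
        Real.sqrt (((n : ℝ) + a) / ((n : ℝ) + b)) * d n)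
    (T0 T1 X : Hl →L[ℂ] Hl)
    (hT0 : ∀ n : ℤ, T0 (eb n) = (t n : ℂ) • eb (n + 1))
    (hT1 : ∀ n : ℤ, T1 (eb n) = ((t n : ℂ))⁻¹ • eb (n + 1))
    (hX : ∀ n : ℤ, X (eb n) = (d n : ℂ) • eb n)
    (hXT : X.comp T1 ≠ T0.comp X)
    (hsymm : ∀ n : ℤ, d n = d (-n))
    (hcond : ∀ n : ℤ,
      Real.sqrt (((n : ℝ) + a) / ((n : ℝ) + b)) * c n *
          ((1 + d n ^ 2) * (((n : ℝ) - a) / ((n : ℝ) - b)) +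
            (1 + d (n - 1) ^ 2) * (((n : ℝ) - b) / ((n : ℝ) - a)) -
            2 * d (n - 1) * d n) ≠
        Real.sqrt (((n : ℝ) - b) / ((n : ℝ) - a)) * c (n - 1) *
          ((1 - d n ^ 2) * (((n : ℝ) + a) / ((n : ℝ) + b)) -
            (1 + d (n + 1) ^ 2) * (((n : ℝ) + b) / ((n : ℝ) + a)) +
            2 * d n * d (n + 1))) :
    IsIrreducibleOp (blockT T0 T1 X) :=
  irreducibility_example_sqrt_weights_general ha hab hb htdef hT0 hT1 hX hXT
end
end
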